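/- Let T be a degree-d cubes table on F_q^n with n ≥ 6, where d ≥ 1 and 11d < q^{1/9}. If T passes the cube versus cube test with probability ε = ε(T) ≥ 10⁷d⁶/q, then there exists an n-variate polynomial g over F_q of total degree at most d such that g|_C = T(C) for at least an ε/30 fraction of all cubes C. -/

import Mathlib

/-!
A cube is parametrized as `Cb F x u v w` by a random point `x` and three random directions, so that
probabilities over cubes become expectations over vectors. Degenerate tuples do no harm, since every
predicate used requires the subspace to be a cube, and all fibers over cubes (or over pairs of cubes
meeting in a plane) have the same size (`ncard_cubes`, `test_le`). Two cubes accepted by the test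
agree at their common random point, so that up to the factor `1 - 4 / q` the acceptance probability
`ε` is at most `∑ σ, 𝔼 x u v, (ℙ w (T C x = σ)) ^ 2`, where `C = Cb F x u v w`.

*Concentration.* The subspace `Cb F x u v w` does not change when `u` moves to `u + b v + c w`, and
such points are pairwise independent. Hence (`sampling`) fixing one or two directions barely
changes the probability of an event, as long as that probability is much larger than `1 / q`. This
replaces every expansion argument.

*Local structure.* Call `σ` exceptional at `x` if the cubes with value `σ` at `x` have mass at
least `ε / 2` among the cubes through `x` and two of them sharing two directions `u`, `v` rarely
disagree at `x + u`. Exceptional values carry almost half of `ε` (`exceptional_mass`), because two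
polynomials that differ on a line coincide at no more than `d` of its points (`sum_disagree_le`).
For an exceptional value, the most popular value at each point of the space defines a function
which agrees with most of these cubes (`local_majority`), hence passes the low-degree line test
(`local_line_test`). Self-correction (`rubinfeld_sudan`) then gives a function `g x σ` of degree at
most `d` on lines that agrees with nine tenths of these cubes (`local_structure`).

*Global structure.* By a second-moment bound (`second_moment`), a random cube often agrees both with
the local function at `x` and with the one at `x + u`. If these two functions were different, they
would agree at two further random points only with probability `O(d ^ 2 / q ^ 2)` (`two_zeros`). So
some single function is the local function at a fraction of order `ε` of all points
(`mass_weight`). At each of these points it agrees with cubes of mass `0.45 ε`, and since the mass of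
a fixed family of cubes is nearly the same at all points (`point_weight`), it agrees with an `ε / 5`
fraction of all cubes (`global_structure`). Finally, a function of degree at most `d` on lines is a
polynomial of total degree at most `d` (`LineDeg.exists_poly`).
-/

open MvPolynomial

/-- A cube: a 3-dimensional affine subspace of `F^n`. -/
def IsCube (F : Type) [Field F] [Fintype F] (n : ℕ) (C : AffineSubspace F (Fin n → F)) : Prop :=
  (C : Set (Fin n → F)).Nonempty ∧ Module.finrank F C.direction = 3

/-- A line: a 1-dimensional affine subspace of `F^n`. -/
def IsLine (F : Type) [Field F] [Fintype F] (n : ℕ) (ℓ : AffineSubspace F (Fin n → F)) : Prop :=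
  (ℓ : Set (Fin n → F)).Nonempty ∧ Module.finrank F ℓ.direction = 1

/-- `𝒞_x`: cubes containing the point `x`. -/
def cubesOn (F : Type) [Field F] [Fintype F] (n : ℕ) (x : Fin n → F) :
    Set (AffineSubspace F (Fin n → F)) :=
  {C | IsCube F n C ∧ x ∈ C}

/-- `𝒞_{x,y}`: cubes containing the points `x` and `y`. -/
def cubesOn2 (F : Type) [Field F] [Fintype F] (n : ℕ) (x y : Fin n → F) :
    Set (AffineSubspace F (Fin n → F)) :=
  {C | IsCube F n C ∧ x ∈ C ∧ y ∈ C}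

/-- `𝒞_{x,σ}`: cubes containing `x` on which the table `T` gives `x` the value `σ`. -/
def cubesVal (F : Type) [Field F] [Fintype F] (n : ℕ)
    (T : AffineSubspace F (Fin n → F) → (Fin n → F) → F) (x : Fin n → F) (σ : F) :
    Set (AffineSubspace F (Fin n → F)) :=
  {C | IsCube F n C ∧ x ∈ C ∧ T C x = σ}

/-- `μ_x(A)`: measure of `A` relative to all cubes containing `x`. -/
noncomputable def muX (F : Type) [Field F] [Fintype F] (n : ℕ) (x : Fin n → F)
    (A : Set (AffineSubspace F (Fin n → F))) : ℝ :=
  (A.ncard : ℝ) / ((cubesOn F n x).ncard : ℝ)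

/-- `μ_{x,y}(A)`: measure of `A` relative to all cubes containing `x` and `y`. -/
noncomputable def muXY (F : Type) [Field F] [Fintype F] (n : ℕ) (x y : Fin n → F)
    (A : Set (AffineSubspace F (Fin n → F))) : ℝ :=
  (A.ncard : ℝ) / ((cubesOn2 F n x y).ncard : ℝ)

/-- Two cubes intersecting in a plane (a 2-dimensional affine subspace). -/
def PlanePair (F : Type) [Field F] [Fintype F] (n : ℕ)
    (C₁ C₂ : AffineSubspace F (Fin n → F)) : Prop :=
  IsCube F n C₁ ∧ IsCube F n C₂ ∧
    ((C₁ ⊓ C₂ : AffineSubspace F (Fin n → F)) : Set (Fin n → F)).Nonempty ∧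
    Module.finrank F (C₁ ⊓ C₂ : AffineSubspace F (Fin n → F)).direction = 2

/-- `T(C₁)` and `T(C₂)` agree on `C₁ ∩ C₂`. -/
def Agrees (F : Type) [Field F] [Fintype F] (n : ℕ)
    (T : AffineSubspace F (Fin n → F) → (Fin n → F) → F)
    (C₁ C₂ : AffineSubspace F (Fin n → F)) : Prop :=
  ∀ z : Fin n → F, z ∈ C₁ → z ∈ C₂ → T C₁ z = T C₂ z

/-- `ε(T)`: the acceptance probability of the cube versus cube test. -/
noncomputable def epsT (F : Type) [Field F] [Fintype F] (n : ℕ)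
    (T : AffineSubspace F (Fin n → F) → (Fin n → F) → F) : ℝ :=
  (({p : AffineSubspace F (Fin n → F) × AffineSubspace F (Fin n → F) |
      PlanePair F n p.1 p.2 ∧ Agrees F n T p.1 p.2}).ncard : ℝ) /
  (({p : AffineSubspace F (Fin n → F) × AffineSubspace F (Fin n → F) |
      PlanePair F n p.1 p.2}).ncard : ℝ)

/-- A degree-`d` cubes table: each entry is the restriction to `C` of a polynomial of total
degree at most `d`. -/
def DegTable (F : Type) [Field F] [Fintype F] (n d : ℕ)
    (T : AffineSubspace F (Fin n → F) → (Fin n → F) → F) : Prop :=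
  ∀ C : AffineSubspace F (Fin n → F), IsCube F n C →
    ∃ p : MvPolynomial (Fin n) F, p.totalDegree ≤ d ∧ ∀ z ∈ C, T C z = eval z p

/-- `γ = 1/(1000 d³)`. -/
noncomputable def gam (d : ℕ) : ℝ := 1 / (1000 * (d : ℝ) ^ 3)

open scoped BigOperators

/-! ### Indicators and expectations over finite types -/

open Classical in
/-- The real-valued indicator of a proposition. -/
noncomputable def ind (P : Prop) : ℝ := if P then 1 else 0

lemma ind_nonneg (P : Prop) : 0 ≤ ind P := by unfold ind; split_ifs <;> norm_num
lemma ind_le_one (P : Prop) : ind P ≤ 1 := by unfold ind; split_ifs <;> norm_num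
lemma ind_true {P : Prop} (h : P) : ind P = 1 := by simp [ind, h]
lemma ind_false {P : Prop} (h : ¬ P) : ind P = 0 := by simp [ind, h]
lemma ind_mono {P Q : Prop} (h : P → Q) : ind P ≤ ind Q := by
  by_cases hP : P
  · rw [ind_true hP, ind_true (h hP)]
  · rw [ind_false hP]; exact ind_nonneg Q
lemma ind_congr {P Q : Prop} (h : P ↔ Q) : ind P = ind Q := by rw [propext h]
lemma ind_and (P Q : Prop) : ind (P ∧ Q) = ind P * ind Q := by
  by_cases hP : P <;> by_cases hQ : Q <;> simp [ind, hP, hQ]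
lemma ind_le_add {P Q R : Prop} (h : P → Q ∨ R) : ind P ≤ ind Q + ind R := by
  by_cases hQ : Q
  · rw [ind_true hQ]; linarith [ind_le_one P, ind_nonneg R]
  · by_cases hR : R
    · rw [ind_true hR]; linarith [ind_le_one P, ind_nonneg Q]
    · rw [ind_false (fun hP => (h hP).elim hQ hR)]; linarith [ind_nonneg Q, ind_nonneg R]
lemma ind_sq (P : Prop) : ind P ^ 2 = ind P := by
  by_cases hP : P <;> simp [ind, hP]
lemma ind_not (P : Prop) : ind (¬ P) = 1 - ind P := by
  by_cases hP : P <;> simp [ind, hP]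

section Expectation
variable {α β : Type*} [Fintype α] [Fintype β]

lemma E_mono {f g : α → ℝ} (h : ∀ a, f a ≤ g a) : 𝔼 a, f a ≤ 𝔼 a, g a :=
  Finset.expect_le_expect fun a _ => h a
lemma E_nonneg {f : α → ℝ} (h : ∀ a, 0 ≤ f a) : 0 ≤ 𝔼 a, f a :=
  Finset.expect_nonneg fun a _ => h a
lemma E_congr {f g : α → ℝ} (h : ∀ a, f a = g a) : 𝔼 a, f a = 𝔼 a, g a :=
  Finset.expect_congr rfl fun a _ => h a
lemma E_le [Nonempty α] {f : α → ℝ} {c : ℝ} (h : ∀ a, f a ≤ c) : 𝔼 a, f a ≤ c :=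
  Finset.expect_le Finset.univ_nonempty fun a _ => h a
lemma E_add (f g : α → ℝ) : 𝔼 a, (f a + g a) = 𝔼 a, f a + 𝔼 a, g a :=
  Finset.expect_add_distrib _ _ _
lemma E_sub (f g : α → ℝ) : 𝔼 a, (f a - g a) = 𝔼 a, f a - 𝔼 a, g a :=
  Finset.expect_sub_distrib _ _ _
lemma E_mul_left (c : ℝ) (f : α → ℝ) : 𝔼 a, c * f a = c * 𝔼 a, f a :=
  (Finset.mul_expect _ _ _).symm
lemma E_mul_right (c : ℝ) (f : α → ℝ) : 𝔼 a, f a * c = (𝔼 a, f a) * c :=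
  (Finset.expect_mul _ _ _).symm
lemma E_const [Nonempty α] (c : ℝ) : 𝔼 _a : α, c = c := Fintype.expect_const c
lemma E_comm (f : α → β → ℝ) : 𝔼 a, 𝔼 b, f a b = 𝔼 b, 𝔼 a, f a b :=
  Finset.expect_comm _ _ _
lemma E_sum {ι : Type*} (s : Finset ι) (f : α → ι → ℝ) :
    𝔼 a, ∑ i ∈ s, f a i = ∑ i ∈ s, 𝔼 a, f a i := Finset.expect_sum_comm _ _ _
lemma E_prod (f : α → β → ℝ) : 𝔼 p : α × β, f p.1 p.2 = 𝔼 a, 𝔼 b, f a b := by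
  rw [← Finset.univ_product_univ, Finset.expect_product]
lemma exists_E_le [Nonempty α] {f : α → ℝ} {c : ℝ} (h : 𝔼 a, f a ≤ c) : ∃ a, f a ≤ c := by
  obtain ⟨a, -, ha⟩ := Finset.exists_le_of_expect_le Finset.univ_nonempty h
  exact ⟨a, ha⟩
lemma exists_E_lt [Nonempty α] {f : α → ℝ} {c : ℝ} (h : 𝔼 a, f a < c) : ∃ a, f a < c := by
  obtain ⟨a, -, ha⟩ := Finset.exists_lt_of_expect_lt Finset.univ_nonempty h
  exact ⟨a, ha⟩
lemma exists_le_E [Nonempty α] {f : α → ℝ} {c : ℝ} (h : c ≤ 𝔼 a, f a) : ∃ a, c ≤ f a := by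
  obtain ⟨a, -, ha⟩ := Finset.exists_le_of_le_expect Finset.univ_nonempty h
  exact ⟨a, ha⟩
/-- Jensen's inequality for the square. -/
lemma sq_E_le [Nonempty α] (f : α → ℝ) : (𝔼 a, f a) ^ 2 ≤ 𝔼 a, f a ^ 2 := by
  have := Finset.expect_mul_sq_le_sq_mul_sq Finset.univ f (fun _ : α => (1 : ℝ))
  simpa [E_const] using this
/-- Expectation of an indicator, as a count. -/
lemma card_mul_E_ind (P : α → Prop) :
    (Fintype.card α : ℝ) * 𝔼 a, ind (P a) = ({a | P a} : Set α).ncard := by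
  classical
  rw [Fintype.card_mul_expect]
  simp only [ind, Finset.sum_boole, Set.ncard_eq_toFinset_card']
  congr 2
  ext a; simp

end Expectation

section Shift
variable {F V : Type*} [Field F] [AddCommGroup V] [Module F V] [Fintype V]

lemma E_shift (f : V → ℝ) (a : V) : 𝔼 u, f (u + a) = 𝔼 u, f u :=
  Fintype.expect_equiv (Equiv.addRight a) _ _ fun _ => rfl
lemma E_shift_left (f : V → ℝ) (a : V) : 𝔼 u, f (a + u) = 𝔼 u, f u :=
  Fintype.expect_equiv (Equiv.addLeft a) _ _ fun _ => rfl
lemma E_smul (f : V → ℝ) {c : F} (hc : c ≠ 0) : 𝔼 u, f (c • u) = 𝔼 u, f u :=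
  Fintype.expect_equiv (MulAction.toPerm (Units.mk0 c hc)) _ _ fun _ => rfl

end Shift

/-! ### Pairwise independent sampling -/

section Sampling
variable {V : Type*} [AddCommGroup V] [Fintype V]

/-- Sampling lemma. Let `s` take values in `[0,1]` and be invariant under moving its first
argument `u` along the points `u + σ b w`, and let these points be pairwise independent. Then the
conditional expectation of `s` given `u` has variance at most `(𝔼 s) / |B|`. -/
lemma sampling {W B : Type*} [Fintype W] [Nonempty W] [Fintype B] [Nonempty B]
    (σ : B → W → V)
    (hσ : ∀ b b', b ≠ b' → ∀ φ : V → ℝ, 𝔼 w, φ (σ b w - σ b' w) = 𝔼 v, φ v)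
    (s : V → W → ℝ) (h0 : ∀ u w, 0 ≤ s u w) (h1 : ∀ u w, s u w ≤ 1)
    (hinv : ∀ b u w, s (u + σ b w) w = s u w) :
    𝔼 u, (𝔼 w, s u w - 𝔼 u', 𝔼 w, s u' w) ^ 2 ≤ (𝔼 u, 𝔼 w, s u w) / Fintype.card B := by
  classical
  set m : ℝ := 𝔼 u', 𝔼 w, s u' w with hm
  set φ : V → ℝ := fun u => 𝔼 w, s u w - m with hφ
  set X : ℝ := 𝔼 u, φ u ^ 2 with hX
  have hφ0 : 𝔼 u, φ u = 0 := by
    simp only [hφ, E_sub, E_const]; rw [hm, sub_self]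
  have hm0 : 0 ≤ m := E_nonneg fun u => E_nonneg fun w => h0 u w
  have hX0 : 0 ≤ X := E_nonneg fun u => sq_nonneg _
  have e1 : X = 𝔼 u, 𝔼 w, s u w * φ u := by
    have : ∀ u, φ u ^ 2 = 𝔼 w, s u w * φ u - m * φ u := fun u => by
      rw [E_mul_right]; simp only [hφ]; ring
    rw [hX, E_congr this, E_sub, E_mul_left, hφ0]; ring
  have e2 : ∀ b, X = 𝔼 w, 𝔼 u, s u w * φ (u + σ b w) := fun b => by
    rw [e1, E_comm]
    refine E_congr fun w => ?_
    rw [← E_shift _ (σ b w)]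
    simp only [hinv]
  have e3 : X = 𝔼 p : V × W, s p.1 p.2 * 𝔼 b, φ (p.1 + σ b p.2) := by
    rw [E_prod (fun u w => s u w * 𝔼 b, φ (u + σ b w)), E_comm]
    simp only [← E_mul_left]
    rw [E_congr fun w => E_comm _, E_comm, ← E_congr e2, E_const]
  have e4 : 𝔼 p : V × W, (𝔼 b, φ (p.1 + σ b p.2)) ^ 2 = X / Fintype.card B := by
    have a1 : ∀ p : V × W, (𝔼 b, φ (p.1 + σ b p.2)) ^ 2
        = 𝔼 b, 𝔼 b', φ (p.1 + σ b p.2) * φ (p.1 + σ b' p.2) := fun p => by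
      simp only [E_mul_left, E_mul_right]; ring
    rw [E_congr a1, E_comm, E_congr fun b => E_comm _]
    have a2 : ∀ b b', 𝔼 p : V × W, φ (p.1 + σ b p.2) * φ (p.1 + σ b' p.2)
        = if b = b' then X else 0 := fun b b' => by
      rw [E_prod (fun u w => φ (u + σ b w) * φ (u + σ b' w)), E_comm]
      split_ifs with hb
      · subst hb
        rw [← E_const (α := W) X]
        refine E_congr fun w => ?_
        rw [E_shift (fun u => φ u * φ u)]
        exact E_congr fun u => by ring
      · have a3 : ∀ w, 𝔼 u, φ (u + σ b w) * φ (u + σ b' w)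
            = 𝔼 u, φ (u + (σ b w - σ b' w)) * φ u := fun w => by
          rw [← E_shift (fun u => φ (u + (σ b w - σ b' w)) * φ u) (σ b' w)]
          refine E_congr fun u => ?_
          congr 2; abel
        rw [E_congr a3, E_comm]
        have a4 : ∀ u, 𝔼 w, φ (u + (σ b w - σ b' w)) * φ u = 0 := fun u => by
          rw [E_mul_right, hσ b b' hb (fun v => φ (u + v)), E_shift_left, hφ0, zero_mul]
        rw [E_congr a4]; simp
    rw [E_congr fun b => E_congr (a2 b)]
    have a5 : ∀ b : B, 𝔼 b', (if b = b' then X else 0) = X / Fintype.card B := fun b => by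
      rw [Fintype.expect_eq_sum_div_card, Finset.sum_ite_eq]; simp
    rw [E_congr a5, E_const]
  have e5 : X ^ 2 ≤ m * (X / Fintype.card B) := by
    have := Finset.expect_mul_sq_le_sq_mul_sq Finset.univ (fun p : V × W => s p.1 p.2)
      (fun p => 𝔼 b, φ (p.1 + σ b p.2))
    rw [← e3, e4] at this
    refine this.trans ?_
    gcongr
    rw [hm, ← E_prod]
    exact E_mono fun p => by nlinarith [h0 p.1 p.2, h1 p.1 p.2]
  have hB : (0 : ℝ) < Fintype.card B := by exact_mod_cast Fintype.card_pos
  rcases hX0.eq_or_lt with h | h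
  · rw [← h]; positivity
  · have : X * X ≤ (m / Fintype.card B) * X := by
      calc X * X = X ^ 2 := by ring
        _ ≤ _ := e5
        _ = _ := by ring
    exact le_of_mul_le_mul_right this h

variable {F : Type*} [Field F] [Fintype F] [Module F V]

/-- The sampling lemma for the points `u + β v` of a random line. -/
lemma sampling_one (s : V → V → ℝ) (h0 : ∀ u v, 0 ≤ s u v) (h1 : ∀ u v, s u v ≤ 1)
    (hinv : ∀ (b : F) u v, s (u + b • v) v = s u v) :
    𝔼 u, (𝔼 v, s u v - 𝔼 u', 𝔼 v, s u' v) ^ 2 ≤ (𝔼 u, 𝔼 v, s u v) / Fintype.card F := by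
  refine sampling (fun (b : F) v => b • v) (fun b b' hb φ => ?_) s h0 h1 hinv
  simp only [← sub_smul]
  exact E_smul φ (sub_ne_zero.2 hb)

/-- The sampling lemma for the points `u + β v + γ w` of a random plane. -/
lemma sampling_two (s : V → V → V → ℝ) (h0 : ∀ u v w, 0 ≤ s u v w) (h1 : ∀ u v w, s u v w ≤ 1)
    (hinv : ∀ (b c : F) u v w, s (u + b • v + c • w) v w = s u v w) :
    𝔼 u, (𝔼 v, 𝔼 w, s u v w - 𝔼 u', 𝔼 v, 𝔼 w, s u' v w) ^ 2
      ≤ (𝔼 u, 𝔼 v, 𝔼 w, s u v w) / (Fintype.card F : ℝ) ^ 2 := by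
  have := sampling (V := V) (W := V × V) (B := F × F) (fun b p => b.1 • p.1 + b.2 • p.2)
    (fun b b' hb φ => ?_) (fun u p => s u p.1 p.2) (fun u p => h0 _ _ _) (fun u p => h1 _ _ _)
    (fun b u p => by rw [← add_assoc]; exact hinv _ _ _ _ _)
  · simp only [E_prod (s _)] at this
    simpa [sq] using this
  · have : ∀ p : V × V, b.1 • p.1 + b.2 • p.2 - (b'.1 • p.1 + b'.2 • p.2)
        = (b.1 - b'.1) • p.1 + (b.2 - b'.2) • p.2 := fun p => by
      simp only [sub_smul]; abel
    simp only [this]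
    rw [E_prod (fun v w => φ ((b.1 - b'.1) • v + (b.2 - b'.2) • w))]
    by_cases h : b.1 = b'.1
    · have h2 : b.2 - b'.2 ≠ 0 := fun h2 => hb (Prod.ext h (sub_eq_zero.1 h2))
      rw [← E_const (α := V) (𝔼 v, φ v)]
      refine E_congr fun v => ?_
      rw [E_smul (fun w => φ ((b.1 - b'.1) • v + w)) h2, E_shift_left]
    · rw [E_comm, ← E_const (α := V) (𝔼 v, φ v)]
      refine E_congr fun v => ?_
      rw [E_smul (fun w => φ (w + (b.2 - b'.2) • v)) (sub_ne_zero.2 h), E_shift]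

end Sampling

/-! ### Functions of bounded degree on lines -/

section LineDeg
variable {F V W : Type*} [Field F] [AddCommGroup V] [Module F V] [AddCommGroup W] [Module F W]

/-- `f` restricts to a univariate polynomial of degree at most `d` on every line. -/
def LineDeg (F : Type*) {V : Type*} [Field F] [AddCommGroup V] [Module F V] (d : ℕ) (f : V → F) :
    Prop :=
  ∀ y h : V, ∃ P : Polynomial F, P.natDegree ≤ d ∧ ∀ c : F, f (y + c • h) = P.eval c

lemma LineDeg.sub {d : ℕ} {f g : V → F} (hf : LineDeg F d f) (hg : LineDeg F d g) :
    LineDeg F d (fun z => f z - g z) := fun y h => by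
  obtain ⟨P, hP, hP'⟩ := hf y h
  obtain ⟨Q, hQ, hQ'⟩ := hg y h
  exact ⟨P - Q, (Polynomial.natDegree_sub_le P Q).trans (max_le hP hQ), fun c => by
    simp [hP', hQ']⟩

lemma LineDeg.comp_affine {d : ℕ} {f : V → F} (hf : LineDeg F d f) (x : V) (L : W →ₗ[F] V) :
    LineDeg F d (fun w => f (x + L w)) := fun y h => by
  obtain ⟨P, hP, hP'⟩ := hf (x + L y) (L h)
  exact ⟨P, hP, fun c => by
    rw [← hP' c]; simp only [map_add, map_smul, add_assoc]⟩

lemma eval_aeval_poly {n : ℕ} (p : MvPolynomial (Fin n) F) (g : Fin n → Polynomial F) (c : F) :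
    (aeval g p).eval c = eval (fun i => (g i).eval c) p := by
  induction p using MvPolynomial.induction_on with
  | C a => simp
  | add p q hp hq => simp [hp, hq]
  | mul_X p i hp => simp [hp]

lemma lineDeg_eval {n d : ℕ} (p : MvPolynomial (Fin n) F) (hp : p.totalDegree ≤ d) :
    LineDeg F d (fun z : Fin n → F => eval z p) := fun y h => by
  refine ⟨aeval (fun i => Polynomial.C (y i) + Polynomial.C (h i) * Polynomial.X) p,
    (aeval_natDegree_le p hp _ (n := 1) fun i => ?_).trans (by simp), fun c => ?_⟩
  · compute_degree
  · rw [eval_aeval_poly]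
    congr 2
    ext i
    simp only [Pi.add_apply, Pi.smul_apply, Pi.zero_apply, smul_eq_mul, Polynomial.eval_add,
      Polynomial.eval_C, Polynomial.eval_mul, Polynomial.eval_X]
    ring

variable [Fintype F]

/-- A nonzero restriction to a line has at most `d` zeros on it. -/
lemma LineDeg.line_zeros {d : ℕ} {D : V → F} (hD : LineDeg F d D) (y h : V) {c₀ : F}
    (h0 : D (y + c₀ • h) ≠ 0) : 𝔼 c : F, ind (D (y + c • h) = 0) ≤ d / Fintype.card F := by
  classical
  obtain ⟨P, hP, hP'⟩ := hD y h
  have hP0 : P ≠ 0 := by rintro rfl; simp [hP'] at h0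
  have hq : (0 : ℝ) < Fintype.card F := by exact_mod_cast Fintype.card_pos
  rw [le_div_iff₀ hq, mul_comm, card_mul_E_ind]
  have : {c : F | D (y + c • h) = 0} ⊆ (P.roots.toFinset : Set F) := fun c hc => by
    simp only [Finset.mem_coe, Multiset.mem_toFinset, Polynomial.mem_roots hP0, Polynomial.IsRoot]
    rw [← hP' c]; exact hc
  have := Set.ncard_le_ncard this (Finset.finite_toSet _)
  rw [Set.ncard_coe_finset] at this
  exact_mod_cast this.trans ((Multiset.toFinset_card_le _).trans ((Polynomial.card_roots' P).trans hP))

/-- A Schwartz–Zippel bound: averaging over the lines through a nonzero `z₀` of `D`, each of which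
contains at most `d` zeros. -/
lemma LineDeg.zeros [Fintype V] {d : ℕ} {D : V → F} (hD : LineDeg F d D) {z₀ : V}
    (h0 : D z₀ ≠ 0) : 𝔼 z, ind (D z = 0) ≤ 2 * d / Fintype.card F := by
  classical
  have hq : (2 : ℝ) ≤ Fintype.card F := by exact_mod_cast Fintype.one_lt_card (α := F)
  set X := 𝔼 z, ind (D z = 0) with hX
  have hX0 : 0 ≤ X := E_nonneg fun z => ind_nonneg _
  have e1 : ∀ c : F, c ≠ 0 → 𝔼 h, ind (D (z₀ + c • h) = 0) = X := fun c hc => by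
    rw [E_smul (fun h => ind (D (z₀ + h) = 0)) hc, E_shift_left (fun h => ind (D h = 0))]
  have e2 : 𝔼 c : F, 𝔼 h, ind (D (z₀ + c • h) = 0) ≤ d / Fintype.card F := by
    rw [E_comm]
    exact E_le fun h => hD.line_zeros z₀ h (c₀ := 0) (by simpa using h0)
  have e3 : (Fintype.card F : ℝ) * 𝔼 c : F, 𝔼 h, ind (D (z₀ + c • h) = 0)
      = (Fintype.card F - 1) * X := by
    rw [Fintype.card_mul_expect, ← Finset.add_sum_erase _ _ (Finset.mem_univ (0 : F)),
      Finset.sum_congr rfl (fun c hc => e1 c (Finset.ne_of_mem_erase hc))]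
    simp only [zero_smul, add_zero, ind_false h0, E_const, zero_add, Finset.sum_const,
      nsmul_eq_mul, Finset.card_erase_of_mem (Finset.mem_univ (0 : F)), Finset.card_univ]
    rw [Nat.cast_sub Fintype.card_pos]; simp
  rw [le_div_iff₀ (by linarith)] at e2 ⊢
  nlinarith

end LineDeg

/-! ### From degree on lines to total degree -/

section ToPoly
variable {F : Type*} [Field F]

lemma aeval_smul_homogeneous {n i : ℕ} {φ : MvPolynomial (Fin n) F} (hφ : φ.IsHomogeneous i)
    (h : Fin n → F) :
    aeval (fun j => Polynomial.C (h j) * Polynomial.X) φ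
      = Polynomial.C (eval h φ) * (Polynomial.X : Polynomial F) ^ i := by
  rw [MvPolynomial.aeval_def, MvPolynomial.eval₂_eq', MvPolynomial.eval_eq', map_sum,
    Finset.sum_mul]
  refine Finset.sum_congr rfl fun s hs => ?_
  have : ∑ j, s j = i := by
    have := hφ (mem_support_iff.1 hs)
    rw [← this, Finsupp.weight_apply, Finsupp.sum_fintype _ _ (by simp)]; simp
  simp only [mul_pow, Finset.prod_mul_distrib, Finset.prod_pow_eq_pow_sum, this, map_mul,
    map_prod, map_pow, mul_assoc]
  rfl

lemma totalDegree_aeval_X_le {n : ℕ} (i : Fin n) (P : Polynomial F) :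
    (Polynomial.aeval (X i : MvPolynomial (Fin n) F) P).totalDegree ≤ P.natDegree := by
  rw [Polynomial.aeval_eq_sum_range]
  refine totalDegree_finsetSum_le fun j hj => ?_
  refine (totalDegree_smul_le _ _).trans ((totalDegree_pow _ _).trans ?_)
  rw [totalDegree_X]
  have := Finset.mem_range.1 hj
  omega

variable [Fintype F]

/-- A polynomial of total degree less than `q` has total degree at most `d` as soon as its
restrictions to lines through the origin have degree at most `d`: its top homogeneous
component does not vanish identically on `F ^ n`. -/
lemma totalDegree_le_of_lineDeg {n d : ℕ} (Q : MvPolynomial (Fin n) F)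
    (hQ : Q.totalDegree < Fintype.card F) (hd : d < Fintype.card F)
    (h : LineDeg F d (fun z : Fin n → F => eval z Q)) : Q.totalDegree ≤ d := by
  by_contra! hlt
  set D := Q.totalDegree with hD
  have hne : homogeneousComponent D Q ≠ 0 := by
    intro h0
    have h1 : Q ∈ Submodule.map LinearMap.id (⊤ : Submodule F (MvPolynomial (Fin n) F)) := by simp
    have hQ0 : Q ≠ 0 := by rintro rfl; simp at hD; omega
    obtain ⟨s, hs, hsD⟩ := Finset.exists_mem_eq_sup Q.support (support_nonempty.2 hQ0)
      (fun s => s.sum fun _ e => e)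
    have : coeff s (homogeneousComponent D Q) = coeff s Q := by
      rw [coeff_homogeneousComponent, if_pos]
      rw [hD, totalDegree, hsD]; rfl
    rw [h0, coeff_zero] at this
    exact mem_support_iff.1 hs this.symm
  obtain ⟨v, hv⟩ : ∃ v, eval v (homogeneousComponent D Q) ≠ 0 := by
    by_contra! hv
    refine hne ((homogeneousComponent_isHomogeneous D Q).eq_zero_of_forall_eval_eq_zero_of_le_card
      hv ?_)
    rw [Cardinal.mk_fintype]; exact_mod_cast hQ.le
  obtain ⟨P, hP, hP'⟩ := h 0 v
  set R : Polynomial F := aeval (fun j => Polynomial.C (v j) * Polynomial.X) Q with hR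
  have hRs : R = ∑ i ∈ Finset.range (D + 1),
      Polynomial.C (eval v (homogeneousComponent i Q)) * (Polynomial.X : Polynomial F) ^ i := by
    rw [hR]
    conv_lhs => rw [← sum_homogeneousComponent Q]
    rw [map_sum]
    exact Finset.sum_congr rfl fun i _ =>
      aeval_smul_homogeneous (homogeneousComponent_isHomogeneous i Q) v
  have hRc : R.coeff D = eval v (homogeneousComponent D Q) := by
    rw [hRs, Polynomial.finsetSum_coeff]
    simp [Polynomial.coeff_X_pow]
  have hRd : R.natDegree ≤ D := by
    simpa using aeval_natDegree_le Q le_rfl (fun j => Polynomial.C (v j) * Polynomial.X) (n := 1)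
      (fun i => by compute_degree)
  have hRe : ∀ c, R.eval c = P.eval c := fun c => by
    rw [← hP' c, hR, eval_aeval_poly]
    congr 2
    ext i
    simp only [Pi.add_apply, Pi.smul_apply, Pi.zero_apply, smul_eq_mul, Polynomial.eval_add,
      Polynomial.eval_C, Polynomial.eval_mul, Polynomial.eval_X]
    ring
  have : R = P := by
    refine Polynomial.eq_of_degree_sub_lt_of_eval_finset_eq Finset.univ ?_ (fun c _ => hRe c)
    refine (Polynomial.degree_le_natDegree).trans_lt ?_
    have := Polynomial.natDegree_sub_le R P
    rw [Finset.card_univ]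
    have h3 : (R - P).natDegree < Fintype.card F := by
      refine this.trans_lt (max_lt (by omega) (by omega))
    exact_mod_cast h3
  rw [this, Polynomial.coeff_eq_zero_of_natDegree_lt (by omega)] at hRc
  exact hv hRc.symm

/-- A function on `F ^ n` which has degree at most `d` on every line is a polynomial of total
degree at most `d`, if `2 d < q`. -/
lemma LineDeg.exists_poly {d : ℕ} (hd : 2 * d < Fintype.card F) :
    ∀ {n : ℕ} (g : (Fin n → F) → F), LineDeg F d g →
      ∃ P : MvPolynomial (Fin n) F, P.totalDegree ≤ d ∧ ∀ z, g z = eval z P := by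
  classical
  intro n
  induction n with
  | zero => exact fun g _ => ⟨C (g 0), by simp, fun z => by simp [Subsingleton.elim z 0]⟩
  | succ n ih =>
    intro g hg
    obtain ⟨S, -, hS⟩ := Finset.exists_subset_card_eq (s := (Finset.univ : Finset F)) (n := d + 1)
      (by rw [Finset.card_univ]; omega)
    have hinj : Set.InjOn (id : F → F) S := Function.injective_id.injOn
    have hcons : ∀ t : F, LineDeg F d (fun y : Fin n → F => g (Fin.cons t y)) := fun t y h => by
      obtain ⟨P, hP, hP'⟩ := hg (Fin.cons t y) (Fin.cons 0 h)
      refine ⟨P, hP, fun c => ?_⟩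
      rw [← hP' c]
      exact congrArg g (funext fun i => by refine Fin.cases ?_ (fun i => ?_) i <;> simp)
    choose P hPd hP using fun t => ih _ (hcons t)
    set Q : MvPolynomial (Fin (n + 1)) F := ∑ t ∈ S, rename Fin.succ (P t) *
      Polynomial.aeval (X 0) (Lagrange.basis S id t) with hQ
    have hQe : ∀ z, g z = eval z Q := fun z => by
      obtain ⟨R, hR, hR'⟩ := hg (Fin.cons 0 (Fin.tail z)) (Fin.cons 1 0)
      have hR2 : ∀ c, g (Fin.cons c (Fin.tail z)) = R.eval c := fun c => by
        rw [← hR' c]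
        exact congrArg g (funext fun i => by refine Fin.cases ?_ (fun i => ?_) i <;> simp)
      have hRi : R = Lagrange.interpolate S id (fun t => R.eval t) := by
        refine Lagrange.eq_interpolate hinj ?_
        rw [hS]
        exact (Polynomial.degree_le_natDegree).trans_lt (by exact_mod_cast Nat.lt_succ_of_le hR)
      have : g z = R.eval (z 0) := by rw [← hR2, Fin.cons_self_tail]
      rw [this, hRi, Lagrange.interpolate_apply, Polynomial.eval_finsetSum, hQ, map_sum]
      refine Finset.sum_congr rfl fun t _ => ?_
      rw [Polynomial.eval_mul, Polynomial.eval_C, map_mul, eval_rename, ← hR2, hP]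
      congr 1
      rw [← MvPolynomial.coe_aeval_eq_eval, RingHom.coe_coe, ← Polynomial.aeval_algHom_apply, aeval_X,
        Polynomial.coe_aeval_eq_eval]
    -- interpolation in the first coordinate only gives degree `2 d`; the lines through `0` reduce it
    have hQd : Q.totalDegree ≤ 2 * d := by
      refine totalDegree_finsetSum_le fun t ht => (totalDegree_mul _ _).trans ?_
      have h1 := (totalDegree_rename_le Fin.succ (P t)).trans (hPd t)
      have h2 := totalDegree_aeval_X_le (0 : Fin (n + 1)) (Lagrange.basis S id t)
      rw [Lagrange.natDegree_basis hinj ht, hS] at h2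
      omega
    refine ⟨Q, totalDegree_le_of_lineDeg Q (by omega) (by omega) ?_, hQe⟩
    have : (fun z : Fin (n + 1) → F => eval z Q) = g := funext fun z => (hQe z).symm
    rw [this]; exact hg

end ToPoly

/-! ### Self-correction along lines -/

section RubinfeldSudan
variable {F V : Type*} [Field F]

lemma ind_le_sum {ι : Type*} {Q : Prop} (S : Finset ι) (P : ι → Prop) (h : Q → ∃ t ∈ S, P t) :
    ind Q ≤ ∑ t ∈ S, ind (P t) := by
  by_cases hQ : Q
  · obtain ⟨t, ht, hP⟩ := h hQ
    rw [ind_true hQ, ← ind_true hP]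
    exact Finset.single_le_sum (f := fun t => ind (P t)) (fun i _ => ind_nonneg _) ht
  · rw [ind_false hQ]; exact Finset.sum_nonneg fun i _ => ind_nonneg _

/-- The weight of the node `t ∈ S` in the extrapolation to `0` of a polynomial of degree
less than `|S|` from its values on `S`. -/
noncomputable def lw [DecidableEq F] (S : Finset F) (t : F) : F := (Lagrange.basis S id t).eval 0

lemma eval_zero_eq_sum_lw [DecidableEq F] {d : ℕ} {S : Finset F} (hS : S.card = d + 1)
    {P : Polynomial F} (hP : P.natDegree ≤ d) : P.eval 0 = ∑ t ∈ S, lw S t * P.eval t := by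
  have hinj : Set.InjOn (id : F → F) S := Function.injective_id.injOn
  have hPi : P = Lagrange.interpolate S id (fun t => P.eval t) := by
    refine Lagrange.eq_interpolate hinj ?_
    rw [hS]
    exact (Polynomial.degree_le_natDegree).trans_lt (by exact_mod_cast Nat.lt_succ_of_le hP)
  conv_lhs => rw [hPi, Lagrange.interpolate_apply, Polynomial.eval_finsetSum]
  refine Finset.sum_congr rfl fun t _ => ?_
  rw [Polynomial.eval_mul, Polynomial.eval_C, mul_comm, lw]

variable [AddCommGroup V] [Module F V]

/-- The value at `y` predicted by `f` at the points `y + t • h`, `t ∈ S`. -/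
noncomputable def extrap [DecidableEq F] (f : V → F) (S : Finset F) (y h : V) : F :=
  ∑ t ∈ S, lw S t * f (y + t • h)

lemma LineDeg.extrap_eq [DecidableEq F] {d : ℕ} {f : V → F} (hf : LineDeg F d f) {S : Finset F}
    (hS : S.card = d + 1) (y h : V) : extrap f S y h = f y := by
  obtain ⟨P, hP, hP'⟩ := hf y h
  have := eval_zero_eq_sum_lw hS hP
  simp only [← hP', zero_smul, add_zero] at this
  rw [this, extrap]

/-- A function equal to its extrapolation from every set of `d + 1` nonzero nodes has degree at most
`d` on lines: on a line it equals its interpolant at `d + 1` fixed points. -/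
lemma lineDeg_of_extrap [DecidableEq F] {d : ℕ} {g : V → F}
    (hcard : ∃ S : Finset F, S.card = d + 1)
    (H : ∀ S : Finset F, S.card = d + 1 → 0 ∉ S → ∀ y h, g y = extrap g S y h) :
    LineDeg F d g := fun y h => by
  obtain ⟨S₁, hS₁⟩ := hcard
  have hinj : Set.InjOn (id : F → F) S₁ := Function.injective_id.injOn
  set P := Lagrange.interpolate S₁ id (fun c => g (y + c • h)) with hP
  have hPd : P.natDegree ≤ d := by
    have := Lagrange.degree_interpolate_lt (fun c => g (y + c • h)) hinj
    rw [hS₁, ← hP] at this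
    exact Polynomial.natDegree_le_iff_coeff_eq_zero.2 fun N hN =>
      (Polynomial.degree_lt_iff_coeff_zero P (d + 1)).1 (by exact_mod_cast this) N hN
  have hnode : ∀ c ∈ S₁, g (y + c • h) = P.eval c := fun c hc =>
    (Lagrange.eval_interpolate_at_node (fun c => g (y + c • h)) hinj hc).symm
  refine ⟨P, hPd, fun c => ?_⟩
  by_cases hc : c ∈ S₁
  · exact hnode c hc
  set S := S₁.image (fun s => s - c) with hS
  have hScard : S.card = d + 1 := by
    rw [hS, Finset.card_image_of_injective _ (sub_left_injective), hS₁]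
  have h0 : (0 : F) ∉ S := by
    simp only [hS, Finset.mem_image, not_exists, not_and]
    intro s hs hsc
    exact hc (sub_eq_zero.1 hsc ▸ hs)
  have h1 : (P.comp (Polynomial.X + Polynomial.C c)).natDegree ≤ d := by
    rw [Polynomial.natDegree_comp]
    simpa using hPd
  have h2 := eval_zero_eq_sum_lw hScard h1
  simp only [Polynomial.eval_comp, Polynomial.eval_add, Polynomial.eval_X, Polynomial.eval_C,
    zero_add] at h2
  rw [H S hScard h0 (y + c • h) h, h2, extrap]
  refine Finset.sum_congr rfl fun t ht => ?_
  have : t + c ∈ S₁ := by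
    obtain ⟨s, hs, rfl⟩ := Finset.mem_image.1 ht
    simpa using hs
  rw [← hnode _ this, add_smul, add_assoc, add_comm (c • h)]

variable [Fintype F] [Fintype V]

/-- Self-correction: if `f` agrees with most of its degree-`d` extrapolations along lines,
whatever the set of nodes, then `f` is close to a function of degree at most `d` on every line:
at each point, the extrapolation in a direction whose prediction is shared by most directions. -/
lemma rubinfeld_sudan [DecidableEq F] {d : ℕ} (hd : 1 ≤ d) (hcard : d + 2 ≤ Fintype.card F)
    (f : V → F) {r : ℝ} (hr : r * (1000 * (d : ℝ) ^ 2) ≤ 1)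
    (H : ∀ S : Finset F, S.card = d + 1 → 0 ∉ S →
      𝔼 y, 𝔼 h, ind (f y ≠ extrap f S y h) ≤ r) :
    ∃ g : V → F, LineDeg F d g ∧ 𝔼 y, ind (f y ≠ g y) ≤ 2 * r := by
  obtain ⟨S₀, hS₀', hS₀⟩ := Finset.exists_subset_card_eq (s := (Finset.univ : Finset F).erase 0)
    (n := d + 1) (by rw [Finset.card_erase_of_mem (Finset.mem_univ _), Finset.card_univ]; omega)
  have h0S₀ : (0 : F) ∉ S₀ := fun h => by simpa using hS₀' h
  have ne0 : ∀ t ∈ S₀, t ≠ 0 := fun t ht h => h0S₀ (h ▸ ht)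
  have hr0 : 0 ≤ r := (E_nonneg fun y => E_nonneg fun h => ind_nonneg _).trans (H S₀ hS₀ h0S₀)
  have hd1 : (1 : ℝ) ≤ d := by exact_mod_cast hd
  have hrd : r * (d : ℝ) ^ 2 ≤ 1 / 1000 := by linarith
  have hrd1 : r * (d : ℝ) ≤ r * (d : ℝ) ^ 2 := by
    refine mul_le_mul_of_nonneg_left ?_ hr0; nlinarith
  have hrd0 : r ≤ r * (d : ℝ) := by nlinarith
  set η : ℝ := 2 * (d + 1) * r with hη
  have hη2 : η ≤ 1 / 2 := by nlinarith
  have move : ∀ (φ : V → ℝ) (y : V) (t : F), t ≠ 0 → 𝔼 h, φ (y + t • h) = 𝔼 z, φ z :=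
    fun φ y t ht => by
      rw [E_smul (fun h => φ (y + h)) ht, E_shift_left φ]
  -- two random directions predict the same value, as both predictions equal a double sum
  have claim1 : ∀ y, 𝔼 h', 𝔼 h, ind (extrap f S₀ y h ≠ extrap f S₀ y h') ≤ η := by
    intro y
    have key : ∀ h' h, ind (extrap f S₀ y h ≠ extrap f S₀ y h') ≤
        ∑ t ∈ S₀, ind (f (y + t • h) ≠ extrap f S₀ (y + t • h) h') +
        ∑ t ∈ S₀, ind (f (y + t • h') ≠ extrap f S₀ (y + t • h') h) := fun h' h => by
      refine (ind_le_add fun hne => ?_).trans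
        (add_le_add (ind_le_sum S₀ _ id) (ind_le_sum S₀ _ id))
      by_contra! hcon
      refine hne ?_
      unfold extrap
      rw [Finset.sum_congr rfl (fun t ht => by rw [hcon.1 t ht, extrap, Finset.mul_sum]),
        Finset.sum_comm]
      refine Finset.sum_congr rfl fun t ht => ?_
      rw [hcon.2 t ht, extrap, Finset.mul_sum]
      refine Finset.sum_congr rfl fun t' ht' => ?_
      rw [add_right_comm]; ring
    refine (E_mono fun h' => E_mono fun h => key h' h).trans ?_
    simp only [E_add, E_sum]
    rw [hη]
    have e1 : ∀ t ∈ S₀, 𝔼 h', 𝔼 h, ind (f (y + t • h) ≠ extrap f S₀ (y + t • h) h') ≤ r :=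
      fun t ht => by
        rw [E_comm, move (fun z => 𝔼 h', ind (f z ≠ extrap f S₀ z h')) y t (ne0 t ht)]
        exact H S₀ hS₀ h0S₀
    have e2 : ∀ t ∈ S₀, 𝔼 h', 𝔼 h, ind (f (y + t • h') ≠ extrap f S₀ (y + t • h') h) ≤ r :=
      fun t ht => by
        rw [move (fun z => 𝔼 h', ind (f z ≠ extrap f S₀ z h')) y t (ne0 t ht)]
        exact H S₀ hS₀ h0S₀
    have s1 := Finset.sum_le_sum e1
    have s2 := Finset.sum_le_sum e2
    simp only [Finset.sum_const, hS₀, nsmul_eq_mul] at s1 s2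
    push_cast at s1 s2
    linarith
  choose h' hh' using fun y => exists_E_le (claim1 y)
  set g : V → F := fun y => extrap f S₀ y (h' y) with hg
  -- the values of `g` on a line extrapolate, by comparison with parallel lines in a random plane
  have claim2 : ∀ S : Finset F, S.card = d + 1 → 0 ∉ S → ∀ y h, g y = extrap g S y h := by
    intro S hS h0S y h
    by_contra hne
    have key : ∀ h₂ h₁ : V, (1 : ℝ) ≤
        ∑ t ∈ insert 0 S, ind (extrap f S₀ (y + t • h) (h₁ + t • h₂) ≠ g (y + t • h)) +
        ∑ t ∈ S₀, ind (f (y + t • h₁) ≠ extrap f S (y + t • h₁) (h + t • h₂)) := fun h₂ h₁ => by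
      rw [← ind_true hne]
      refine (ind_le_add fun _ => ?_).trans
        (add_le_add (ind_le_sum _ _ id) (ind_le_sum S₀ _ id))
      by_contra! hcon
      refine hne ?_
      have h0 := hcon.1 0 (Finset.mem_insert_self _ _)
      simp only [zero_smul, add_zero] at h0
      rw [← h0]
      unfold extrap
      rw [Finset.sum_congr rfl (fun t ht => by rw [hcon.2 t ht, extrap, Finset.mul_sum]),
        Finset.sum_comm]
      refine Finset.sum_congr rfl fun t ht => ?_
      rw [← hcon.1 t (Finset.mem_insert_of_mem ht), extrap, Finset.mul_sum]
      refine Finset.sum_congr rfl fun t' ht' => ?_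
      have : y + t' • h₁ + t • (h + t' • h₂) = y + t • h + t' • (h₁ + t • h₂) := by module
      rw [this]; ring
    have hE := E_mono fun h₂ => E_mono fun h₁ => key h₂ h₁
    simp only [E_add, E_sum, E_const] at hE
    have e1 : ∀ t ∈ insert 0 S,
        𝔼 h₂ : V, 𝔼 h₁ : V, ind (extrap f S₀ (y + t • h) (h₁ + t • h₂) ≠ g (y + t • h)) ≤ η :=
      fun t ht => E_le fun h₂ => by
        rw [E_shift (fun h₁ => ind (extrap f S₀ (y + t • h) h₁ ≠ g (y + t • h)))]
        exact hh' _
    have e2 : ∀ t ∈ S₀,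
        𝔼 h₂ : V, 𝔼 h₁ : V, ind (f (y + t • h₁) ≠ extrap f S (y + t • h₁) (h + t • h₂)) ≤ r :=
      fun t ht => by
        rw [move (fun z => 𝔼 h₁ : V, ind (f (y + t • h₁) ≠ extrap f S (y + t • h₁) z)) h t
          (ne0 t ht), E_comm, move (fun z => 𝔼 h₁ : V, ind (f z ≠ extrap f S z h₁)) y t (ne0 t ht)]
        exact H S hS h0S
    have s1 := Finset.sum_le_sum e1
    have s2 := Finset.sum_le_sum e2
    simp only [Finset.sum_const, hS₀, hS, Finset.card_insert_of_notMem h0S, nsmul_eq_mul] at s1 s2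
    push_cast at s1 s2
    nlinarith
  refine ⟨g, lineDeg_of_extrap ⟨S₀, hS₀⟩ claim2, ?_⟩
  have claim3 : ∀ y, ind (f y ≠ g y) ≤ 2 * 𝔼 h, ind (f y ≠ extrap f S₀ y h) := fun y => by
    by_cases hy : f y ≠ g y
    · have : (1 : ℝ) ≤ 𝔼 h, ind (f y ≠ extrap f S₀ y h) + 𝔼 h, ind (extrap f S₀ y h ≠ g y) := by
        rw [← E_add, ← E_const (α := V) (1 : ℝ)]
        refine E_mono fun h => ?_
        rw [← ind_true hy]
        refine ind_le_add fun hne => ?_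
        by_contra! hcon
        exact hne (hcon.1.trans hcon.2)
      have h1 := hh' y
      rw [ind_true hy]; simp only [hg] at this ⊢; linarith
    · rw [ind_false hy]
      have : (0 : ℝ) ≤ 𝔼 h, ind (f y ≠ extrap f S₀ y h) := E_nonneg fun h => ind_nonneg _
      linarith
  refine (E_mono claim3).trans ?_
  rw [E_mul_left]
  linarith [H S₀ hS₀ h0S₀]

end RubinfeldSudan

/-! ### Random three-dimensional subspaces -/

section Cb
variable {F V : Type*} [Field F] [AddCommGroup V] [Module F V]

/-- The affine subspace through `x` spanned by three directions. Degenerate triples are allowed;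
only the predicates applied to `Cb x u v w` require it to be a cube. -/
def Cb (F : Type*) {V : Type*} [Field F] [AddCommGroup V] [Module F V] (x u v w : V) :
    AffineSubspace F V :=
  AffineSubspace.mk' x (Submodule.span F {u, v, w})

lemma mem_Cb {x u v w z : V} :
    z ∈ Cb F x u v w ↔ ∃ a b c : F, z = x + (a • u + b • v + c • w) := by
  rw [Cb, AffineSubspace.mem_mk', vsub_eq_sub, Submodule.mem_span_triple]
  constructor
  · rintro ⟨a, b, c, h⟩; exact ⟨a, b, c, by rw [h]; abel⟩
  · rintro ⟨a, b, c, h⟩; exact ⟨a, b, c, by rw [h]; abel⟩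

lemma Cb_swap (x u v w : V) : Cb F x v u w = Cb F x u v w := by
  rw [Cb, Cb, Set.insert_comm]

lemma Cb_swap' (x u v w : V) : Cb F x u w v = Cb F x u v w := by
  rw [Cb, Cb, Set.pair_comm]

lemma Cb_smul (x u v w : V) {a : F} (ha : a ≠ 0) (b c : F) :
    Cb F x (a • u + b • v + c • w) v w = Cb F x u v w := by
  ext z
  rw [mem_Cb, mem_Cb]
  constructor
  · rintro ⟨α, β, γ, h⟩
    exact ⟨α * a, α * b + β, α * c + γ, by rw [h]; module⟩
  · rintro ⟨α, β, γ, h⟩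
    refine ⟨α * a⁻¹, β - α * a⁻¹ * b, γ - α * a⁻¹ * c, ?_⟩
    rw [h]
    have : α • u = (α * a⁻¹ * a) • u := by rw [inv_mul_cancel_right₀ ha]
    rw [this]; module

lemma Cb_shear₁ (x u v w : V) (b c : F) : Cb F x (u + b • v + c • w) v w = Cb F x u v w := by
  simpa using Cb_smul x u v w (one_ne_zero (α := F)) b c

lemma Cb_shear (x u v w : V) (b : F) : Cb F x (u + b • v) v w = Cb F x u v w := by
  simpa using Cb_shear₁ x u v w b 0

lemma Cb_shear₂ (x u v w : V) (b : F) : Cb F x u (v + b • w) w = Cb F x u v w := by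
  have := Cb_shear₁ (F := F) x v u w 0 b
  rw [Cb_swap, ← Cb_swap x u v w, ← this]; simp

lemma Cb_base (x u v w : V) (a b c : F) :
    Cb F (x + (a • u + b • v + c • w)) u v w = Cb F x u v w := by
  ext z
  rw [mem_Cb, mem_Cb]
  constructor
  · rintro ⟨α, β, γ, h⟩
    exact ⟨a + α, b + β, c + γ, by rw [h]; module⟩
  · rintro ⟨α, β, γ, h⟩
    exact ⟨α - a, β - b, γ - c, by rw [h]; module⟩

end Cb

/-! ### The mass of a family of subspaces through a point -/

section Mass
variable {F V : Type*} [Field F] [AddCommGroup V] [Module F V] [Fintype V]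

lemma E_sub_sq {α : Type*} [Fintype α] [Nonempty α] (f : α → ℝ) (c : ℝ) :
    𝔼 a, (f a - c) ^ 2 = 𝔼 a, (f a - 𝔼 a', f a') ^ 2 + (𝔼 a', f a' - c) ^ 2 := by
  set m := 𝔼 a', f a' with hm
  have h1 : ∀ a, (f a - c) ^ 2 = (f a - m) ^ 2 + (2 * (m - c) * f a + (c ^ 2 - m ^ 2)) :=
    fun a => by ring
  rw [E_congr h1, E_add, E_add, E_mul_left, E_const, ← hm]; ring

/-- The probability that the affine subspace through `x` with three random directions
satisfies `R`. -/
noncomputable def mass (x : V) (R : AffineSubspace F V → Prop) : ℝ :=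
  𝔼 u, 𝔼 v, 𝔼 w, ind (R (Cb F x u v w))

lemma mass_nonneg (x : V) (R : AffineSubspace F V → Prop) : 0 ≤ mass x R :=
  E_nonneg fun _ => E_nonneg fun _ => E_nonneg fun _ => ind_nonneg _

lemma mass_le_one (x : V) (R : AffineSubspace F V → Prop) : mass x R ≤ 1 :=
  E_le fun _ => E_le fun _ => E_le fun _ => ind_le_one _

variable [Fintype F]

lemma card_pos' : (0 : ℝ) < Fintype.card F := by exact_mod_cast Fintype.card_pos
lemma one_le_card' : (1 : ℝ) ≤ Fintype.card F := by exact_mod_cast Fintype.card_pos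

/-- Fixing one random direction `u` barely changes the mass: the subspaces spanned by `x`, `u`, `v`,
`w` also arise from the directions `u + b v + c w`, which are `q ^ 2` pairwise independent ones. -/
lemma mass_var_two (x : V) (R : AffineSubspace F V → Prop) :
    𝔼 u, (𝔼 v, 𝔼 w, ind (R (Cb F x u v w)) - mass x R) ^ 2
      ≤ mass x R / (Fintype.card F : ℝ) ^ 2 :=
  sampling_two (F := F) (fun u v w => ind (R (Cb F x u v w))) (fun _ _ _ => ind_nonneg _)
    (fun _ _ _ => ind_le_one _) (fun b c u v w => by rw [Cb_shear₁])

/-- Given `u`, fixing a second direction `v` barely changes the conditional mass: `v` can be moved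
to `v + b w`. -/
lemma mass_var_one (x u : V) (R : AffineSubspace F V → Prop) :
    𝔼 v, (𝔼 w, ind (R (Cb F x u v w)) - 𝔼 v', 𝔼 w, ind (R (Cb F x u v' w))) ^ 2
      ≤ (𝔼 v, 𝔼 w, ind (R (Cb F x u v w))) / Fintype.card F :=
  sampling_one (F := F) (fun v w => ind (R (Cb F x u v w))) (fun _ _ => ind_nonneg _)
    (fun _ _ => ind_le_one _) (fun b v w => by rw [Cb_shear₂])

/-- Fixing two random directions barely changes the mass. -/
lemma mass_var (x : V) (R : AffineSubspace F V → Prop) :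
    𝔼 u, 𝔼 v, (𝔼 w, ind (R (Cb F x u v w)) - mass x R) ^ 2 ≤ 2 * mass x R / Fintype.card F := by
  have h : ∀ u, 𝔼 v, (𝔼 w, ind (R (Cb F x u v w)) - mass x R) ^ 2 ≤
      (𝔼 v, 𝔼 w, ind (R (Cb F x u v w))) * (1 / Fintype.card F)
        + (𝔼 v, 𝔼 w, ind (R (Cb F x u v w)) - mass x R) ^ 2 := fun u => by
    rw [E_sub_sq, mul_one_div]
    exact add_le_add_left (mass_var_one x u R) _
  refine (E_mono h).trans ?_
  rw [E_add, E_mul_right, ← mass]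
  have h2 := mass_var_two (F := F) x R
  have h3 : mass x R / (Fintype.card F : ℝ) ^ 2 ≤ mass x R / Fintype.card F := by
    have := one_le_card' (F := F)
    exact div_le_div_of_nonneg_left (mass_nonneg x R) card_pos' (by nlinarith)
  rw [mul_one_div]
  have : 2 * mass x R / (Fintype.card F : ℝ) = mass x R / (Fintype.card F : ℝ) +
    mass x R / (Fintype.card F : ℝ) := by ring
  linarith

end Mass

/-! ### Local structure: cubes through one point -/

section Local
variable {F V : Type*} [Field F] [AddCommGroup V] [Module F V]

/-- The linear map `(a, b, c) ↦ a u + b v + c w`. -/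
def combMap (F : Type*) {V : Type*} [Field F] [AddCommGroup V] [Module F V] (u v w : V) :
    F × F × F →ₗ[F] V :=
  (LinearMap.toSpanSingleton F V u).coprod
    ((LinearMap.toSpanSingleton F V v).coprod (LinearMap.toSpanSingleton F V w))

lemma combMap_apply (u v w : V) (c : F × F × F) :
    combMap F u v w c = c.1 • u + c.2.1 • v + c.2.2 • w := by
  simp [combMap, add_assoc]

variable [Fintype V] [Fintype F]

/-- The probability that two random subspaces through `x` with the common directions `u` (given) and
`v` (random) both satisfy `R` and carry different values at the point `x + u`. -/
noncomputable def disagree (x : V) (R : AffineSubspace F V → Prop)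
    (p : AffineSubspace F V → V → F) (u : V) : ℝ :=
  𝔼 v, 𝔼 w, 𝔼 w', ind (R (Cb F x u v w)) * ind (R (Cb F x u v w')) *
    ind (p (Cb F x u v w) (x + u) ≠ p (Cb F x u v w') (x + u))

lemma E_mul_E {α β : Type*} [Fintype α] [Fintype β] (f : α → ℝ) (g : β → ℝ) :
    𝔼 a, 𝔼 b, f a * g b = (𝔼 a, f a) * 𝔼 b, g b := by
  simp only [E_mul_left, E_mul_right]

lemma E_sum_ind_eq {α β : Type*} [Fintype α] [Fintype β] [DecidableEq β] (P : α → Prop)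
    (φ : α → β) :
    ∑ τ, 𝔼 a, ind (P a ∧ φ a = τ) = 𝔼 a, ind (P a) := by
  rw [← E_sum]
  refine E_congr fun a => ?_
  rw [Finset.sum_congr rfl (fun τ _ => ind_and _ _), ← Finset.mul_sum]
  rw [Finset.sum_eq_single (φ a) (fun τ _ hτ => ind_false (Ne.symm hτ)) (by simp),
    ind_true rfl, mul_one]

/-- Collision count: two independent samples of `a` satisfy `P` and differ in `φ` with the
stated probability. -/
lemma collision {α β : Type*} [Fintype α] [Fintype β] [DecidableEq β] (P : α → Prop)
    (φ : α → β) :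
    𝔼 a, 𝔼 b, ind (P a) * ind (P b) * ind (φ a ≠ φ b) =
      (𝔼 a, ind (P a)) ^ 2 - ∑ τ, (𝔼 a, ind (P a ∧ φ a = τ)) ^ 2 := by
  have h : ∀ a b, ind (P a) * ind (P b) * ind (φ a ≠ φ b) =
      ind (P a) * ind (P b) - ∑ τ, ind (P a ∧ φ a = τ) * ind (P b ∧ φ b = τ) := fun a b => by
    have : ∑ τ, ind (P a ∧ φ a = τ) * ind (P b ∧ φ b = τ)
        = ind (P a) * ind (P b) * ind (φ a = φ b) := by
      simp only [ind_and]
      rw [Finset.sum_eq_single (φ a)]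
      · rw [ind_true (rfl : φ a = φ a), ind_congr (eq_comm : φ b = φ a ↔ _)]; ring
      · intro τ _ hτ
        rw [ind_false (Ne.symm hτ)]; ring
      · simp
    rw [this, ind_not]; ring
  simp only [h, E_sub, E_sum, E_mul_E, sq]

/-- The most popular value at each point. For each direction `u` the lemma bounds the
mass `e` of the subspaces with an unpopular value at `x + u`, times the mass `L` of all
subspaces, by the disagreement. -/
lemma exists_majority [DecidableEq F] (x : V) (R : AffineSubspace F V → Prop)
    (p : AffineSubspace F V → V → F) (u : V) :
    ∃ σ : F, (𝔼 v, 𝔼 w, ind (R (Cb F x u v w))) *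
        (𝔼 v, 𝔼 w, ind (R (Cb F x u v w) ∧ p (Cb F x u v w) (x + u) ≠ σ)) ≤
      disagree x R p u + (𝔼 v, 𝔼 w, ind (R (Cb F x u v w))) / Fintype.card F := by
  set L := 𝔼 v, 𝔼 w, ind (R (Cb F x u v w)) with hL
  set Lt : F → ℝ := fun τ => 𝔼 v, 𝔼 w, ind (R (Cb F x u v w) ∧ p (Cb F x u v w) (x + u) = τ)
    with hLt
  obtain ⟨σ, hσ⟩ := Finite.exists_max Lt
  have hq := card_pos' (F := F)
  have hLt0 : ∀ τ, 0 ≤ Lt τ := fun τ => E_nonneg fun v => E_nonneg fun w => ind_nonneg _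
  have hsum : ∑ τ, Lt τ = L := by
    rw [hLt, ← E_sum]
    exact E_congr fun v => E_sum_ind_eq _ _
  refine ⟨σ, ?_⟩
  have he : 𝔼 v, 𝔼 w, ind (R (Cb F x u v w) ∧ p (Cb F x u v w) (x + u) ≠ σ) = L - Lt σ := by
    rw [hL, hLt]
    simp only [← E_sub, ind_and, ind_not]
    refine E_congr fun v => E_congr fun w => by ring
  have hdis : disagree x R p u = 𝔼 v, (𝔼 w, ind (R (Cb F x u v w))) ^ 2 -
      ∑ τ, 𝔼 v, (𝔼 w, ind (R (Cb F x u v w) ∧ p (Cb F x u v w) (x + u) = τ)) ^ 2 := by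
    rw [disagree, ← E_sum, ← E_sub]
    exact E_congr fun v => collision _ _
  have h1 : L ^ 2 ≤ 𝔼 v, (𝔼 w, ind (R (Cb F x u v w))) ^ 2 := sq_E_le _
  have h2 : ∀ τ, 𝔼 v, (𝔼 w, ind (R (Cb F x u v w) ∧ p (Cb F x u v w) (x + u) = τ)) ^ 2
      ≤ Lt σ * Lt τ + Lt τ * (1 / Fintype.card F) := fun τ => by
    have h3 := mass_var_one x u (fun C => R C ∧ p C (x + u) = τ)
    have h4 := E_sub_sq (fun v => 𝔼 w, ind (R (Cb F x u v w) ∧ p (Cb F x u v w) (x + u) = τ)) 0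
    simp only [sub_zero] at h4
    have h5 : Lt τ ^ 2 ≤ Lt σ * Lt τ := by
      rw [sq]; exact mul_le_mul_of_nonneg_right (hσ τ) (hLt0 τ)
    rw [h4, mul_one_div]
    change _ + Lt τ ^ 2 ≤ _
    change _ ≤ Lt τ / _ at h3
    linarith
  have h3 := Finset.sum_le_sum fun τ (_ : τ ∈ Finset.univ) => h2 τ
  rw [Finset.sum_add_distrib, ← Finset.mul_sum, ← Finset.sum_mul, hsum, mul_one_div] at h3
  rw [he, hdis]
  nlinarith

variable {d : ℕ} {x : V} {R : AffineSubspace F V → Prop} {p : AffineSubspace F V → V → F}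

/-- The popular values, one for each point, agree with most subspaces through `x` satisfying `R`. -/
lemma local_majority (hd : 1 ≤ d)
    (hm : 4 * 10 ^ 6 * (d : ℝ) ^ 6 ≤ mass x R * Fintype.card F)
    (hb : 10 ^ 4 * (d : ℝ) ^ 3 * 𝔼 u, disagree x R p u ≤ mass x R ^ 2) :
    ∃ f : V → F, 10 ^ 5 * (d : ℝ) ^ 3 *
      𝔼 u, 𝔼 v, 𝔼 w, ind (R (Cb F x u v w) ∧ p (Cb F x u v w) (x + u) ≠ f (x + u))
        ≤ 16 * mass x R := by
  classical
  choose σ hσ using exists_majority x R p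
  refine ⟨fun z => σ (z - x), ?_⟩
  simp only [add_sub_cancel_left]
  set m := mass x R with hm'
  set q : ℝ := (Fintype.card F : ℝ) with hq'
  have hq : 0 < q := card_pos'
  set L : V → ℝ := fun u => 𝔼 v, 𝔼 w, ind (R (Cb F x u v w)) with hL
  set e : V → ℝ := fun u => 𝔼 v, 𝔼 w, ind (R (Cb F x u v w) ∧ p (Cb F x u v w) (x + u) ≠ σ u)
    with he
  have hd1 : (1 : ℝ) ≤ d := by exact_mod_cast hd
  have hd3 : (1 : ℝ) ≤ (d : ℝ) ^ 3 := one_le_pow₀ hd1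
  have hmq : 0 < m * q := lt_of_lt_of_le (by positivity) hm
  have hm0 : 0 < m := pos_of_mul_pos_left hmq hq.le
  have he0 : ∀ u, 0 ≤ e u := fun u => E_nonneg fun v => E_nonneg fun w => ind_nonneg _
  have heL : ∀ u, e u ≤ L u := fun u => E_mono fun v => E_mono fun w => ind_mono fun h => h.1
  have hpt : ∀ u, m * e u ≤ 3 / 2 * disagree x R p u + 3 / 2 * (1 / q) * L u
      + 1 / 2 * (L u - m) ^ 2 := fun u => by
    have h1 := hσ u
    change L u * e u ≤ _ + L u / q at h1
    have h2 : L u / q = 1 / q * L u := by ring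
    nlinarith [sq_nonneg (L u - m + e u), he0 u, heL u, mul_nonneg (he0 u) (sub_nonneg.2 (heL u))]
  have hE := E_mono hpt
  rw [E_mul_left] at hE
  simp only [E_add, E_mul_left] at hE
  have hEL : 𝔼 u, L u = m := rfl
  have hvar : 𝔼 u, (L u - m) ^ 2 ≤ m / q := by
    refine (mass_var_two (F := F) x R).trans ?_
    have := one_le_card' (F := F)
    exact div_le_div_of_nonneg_left hm0.le hq (by nlinarith)
  rw [hEL] at hE
  change _ * 𝔼 u, e u ≤ _
  have h5 : 1 / q * m = m / q := by ring
  have hmq2 : 4 * 10 ^ 6 * (d : ℝ) ^ 3 * (m / q) ≤ m ^ 2 := by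
    rw [mul_div_assoc', div_le_iff₀ hq]
    have h36 : (d : ℝ) ^ 3 ≤ (d : ℝ) ^ 6 := pow_le_pow_right₀ hd1 (by norm_num)
    nlinarith
  have hfin : m * (10 ^ 5 * (d : ℝ) ^ 3 * 𝔼 u, e u) ≤ m * (16 * m) := by
    have hE2 : m * 𝔼 u, e u ≤ 3 / 2 * 𝔼 u, disagree x R p u + 2 * (m / q) := by nlinarith
    have := mul_le_mul_of_nonneg_left hE2 (by positivity : 0 ≤ 10 ^ 5 * (d : ℝ) ^ 3)
    nlinarith
  exact le_of_mul_le_mul_left hfin hm0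

/-- The popular values `f` pass the low-degree test on a random line: most lines lie in some
subspace `C` satisfying `R` whose polynomial `p C` agrees with `f` at all the points queried. -/
lemma local_line_test [DecidableEq F] (hd : 1 ≤ d) (hp : ∀ C, R C → LineDeg F d (p C))
    (hm : 4 * 10 ^ 6 * (d : ℝ) ^ 6 ≤ mass x R * Fintype.card F) {f : V → F}
    (hf : 10 ^ 5 * (d : ℝ) ^ 3 *
      𝔼 u, 𝔼 v, 𝔼 w, ind (R (Cb F x u v w) ∧ p (Cb F x u v w) (x + u) ≠ f (x + u))
        ≤ 16 * mass x R) {S : Finset F} (hS : S.card = d + 1) (h0 : 0 ∉ S) :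
    𝔼 y, 𝔼 h, ind (f y ≠ extrap f S y h) ≤ 1 / (1000 * (d : ℝ) ^ 2) := by
  set m := mass x R with hm'
  set q : ℝ := (Fintype.card F : ℝ) with hq'
  have hq : 0 < q := card_pos'
  set e := 𝔼 u, 𝔼 v, 𝔼 w, ind (R (Cb F x u v w) ∧ p (Cb F x u v w) (x + u) ≠ f (x + u)) with he
  have he0 : 0 ≤ e := E_nonneg fun u => E_nonneg fun v => E_nonneg fun w => ind_nonneg _
  have hd1 : (1 : ℝ) ≤ d := by exact_mod_cast hd
  have hmq : 0 < m * q := lt_of_lt_of_le (by positivity) hm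
  have hm0 : 0 < m := pos_of_mul_pos_left hmq hq.le
  set B : V → V → ℝ := fun u v => ind (f (x + u) ≠ extrap f S (x + u) v) with hB
  have hEB : 𝔼 y, 𝔼 h, ind (f y ≠ extrap f S y h) = 𝔼 u, 𝔼 v, B u v :=
    (E_shift_left (fun y => 𝔼 h, ind (f y ≠ extrap f S y h)) x).symm
  set G : V → V → ℝ := fun u v => 𝔼 w, ind (R (Cb F x u v w)) with hG
  have hGB : ∀ u v, G u v * B u v ≤ ∑ t ∈ insert 0 S, 𝔼 w, ind (R (Cb F x (u + t • v) v w) ∧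
      p (Cb F x (u + t • v) v w) (x + (u + t • v)) ≠ f (x + (u + t • v))) := fun u v => by
    rw [← E_mul_right, ← E_sum]
    refine E_mono fun w => ?_
    rw [← ind_and]
    refine ind_le_sum _ _ fun ⟨h1, h2⟩ => ?_
    simp only [Cb_shear]
    by_contra! hcon
    have h3 := (hp _ h1).extrap_eq hS (x + u) v
    refine h2 ?_
    have h4 := hcon 0 (Finset.mem_insert_self _ _) h1
    simp only [zero_smul, add_zero] at h4
    rw [← h4, ← h3, extrap, extrap]
    refine Finset.sum_congr rfl fun t ht => ?_
    rw [add_assoc, hcon t (Finset.mem_insert_of_mem ht) h1]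
  -- each queried point `x + (u + t • v)` spans a random subspace together with `v` and `w`
  have hEGB : 𝔼 u, 𝔼 v, G u v * B u v ≤ (d + 2) * e := by
    refine (E_mono fun u => E_mono fun v => hGB u v).trans (le_of_eq ?_)
    simp only [E_sum]
    rw [Finset.sum_congr rfl (g := fun _ => e) fun t _ => ?_]
    · rw [Finset.sum_const, Finset.card_insert_of_notMem h0, hS, nsmul_eq_mul]; push_cast; ring
    · rw [E_comm, he, E_comm (fun u v => 𝔼 w, ind (R (Cb F x u v w) ∧ _))]
      exact E_congr fun v => E_shift (fun u => 𝔼 w, ind (R (Cb F x u v w) ∧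
        p (Cb F x u v w) (x + u) ≠ f (x + u))) (t • v)
  -- planes on which the conditional mass `G` deviates from `m` are few, by the variance bound
  have hpt : ∀ u v, m ^ 2 * B u v ≤ 2 * m * (G u v * B u v) + (G u v - m) ^ 2 := fun u v => by
    have hBB : B u v ^ 2 = B u v := ind_sq _
    nlinarith [sq_nonneg (m * B u v - (m - G u v))]
  have hE := E_mono fun u => E_mono fun v => hpt u v
  simp only [E_add, E_mul_left] at hE
  have hvar : 𝔼 u, 𝔼 v, (G u v - m) ^ 2 ≤ 2 * m / q := mass_var x R
  rw [hEB, le_div_iff₀ (by positivity)]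
  set b := 𝔼 u, 𝔼 v, B u v with hb
  have hb0 : 0 ≤ b := E_nonneg fun u => E_nonneg fun v => ind_nonneg _
  have h1 : m ^ 2 * b ≤ 2 * m * ((d + 2) * e) + 2 * m / q := by
    have := mul_le_mul_of_nonneg_left hEGB (by positivity : 0 ≤ 2 * m)
    linarith
  have hmq2 : 4 * 10 ^ 6 * (d : ℝ) ^ 2 * (m / q) ≤ m ^ 2 := by
    rw [mul_div_assoc', div_le_iff₀ hq]
    have h26 : (d : ℝ) ^ 2 ≤ (d : ℝ) ^ 6 := pow_le_pow_right₀ hd1 (by norm_num)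
    nlinarith
  have h2 : (d : ℝ) ^ 2 * (d + 2) * e ≤ 3 * (d : ℝ) ^ 3 * e := by
    refine mul_le_mul_of_nonneg_right ?_ he0
    nlinarith [sq_nonneg (d : ℝ)]
  have h3 := mul_le_mul_of_nonneg_left h1 (by positivity : 0 ≤ 1000 * (d : ℝ) ^ 2)
  have h4 : m * ((d : ℝ) ^ 2 * (d + 2) * e) ≤ m * (48 / 10 ^ 5 * m) := by
    refine mul_le_mul_of_nonneg_left ?_ hm0.le
    linarith
  have h6 : 2 * m / q = 2 * (m / q) := by ring
  have hfin : m ^ 2 * (b * (1000 * (d : ℝ) ^ 2)) ≤ m ^ 2 * 1 := by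
    rw [h6] at h3
    nlinarith
  exact le_of_mul_le_mul_left hfin (by positivity)

/-- The Schwartz–Zippel bound inside `Cb F x u v w`. -/
lemma LineDeg.cube_zeros {D : V → F} (hD : LineDeg F d D) {x u v w z : V} (hz : z ∈ Cb F x u v w)
    (h : D z ≠ 0) :
    𝔼 c : F × F × F, ind (D (x + (c.1 • u + c.2.1 • v + c.2.2 • w)) = 0) ≤
      2 * d / Fintype.card F := by
  obtain ⟨a, b, c, rfl⟩ := mem_Cb.1 hz
  have := (hD.comp_affine x (combMap F u v w)).zeros (z₀ := (a, b, c))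
    (by simpa only [combMap_apply] using h)
  simpa only [combMap_apply] using this

/-- If the values at the spanning point `x + u` mostly agree with `g`, then so do the values on
the whole cube, by Schwartz–Zippel inside the cube. -/
lemma cube_agree {g : V → F} (hp : ∀ C, R C → LineDeg F d (p C)) (hg : LineDeg F d g)
    (hdq : 4 * (d : ℝ) ≤ Fintype.card F) :
    mass x (fun C => R C ∧ ∃ z ∈ C, p C z ≠ g z) ≤
      2 * (𝔼 u, 𝔼 v, 𝔼 w, ind (R (Cb F x u v w) ∧ p (Cb F x u v w) (x + u) ≠ g (x + u))
        + mass x R / Fintype.card F) := by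
  classical
  set q : ℝ := (Fintype.card F : ℝ) with hq'
  have hq : 0 < q := card_pos'
  set κ := 𝔼 u, 𝔼 v, 𝔼 w, ind (R (Cb F x u v w) ∧ p (Cb F x u v w) (x + u) ≠ g (x + u)) with hκ
  have hκ0 : 0 ≤ κ := E_nonneg fun u => E_nonneg fun v => E_nonneg fun w => ind_nonneg _
  set A : V → V → V → F × F × F → ℝ := fun u v w c => ind (R (Cb F x u v w) ∧
    p (Cb F x u v w) (x + (c.1 • u + c.2.1 • v + c.2.2 • w)) ≠
      g (x + (c.1 • u + c.2.1 • v + c.2.2 • w))) with hA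
  have h1 : ∀ u v w, ind (R (Cb F x u v w) ∧ ∃ z ∈ Cb F x u v w, p (Cb F x u v w) z ≠ g z) ≤
      2 * 𝔼 c, A u v w c := fun u v w => by
    by_cases h : R (Cb F x u v w) ∧ ∃ z ∈ Cb F x u v w, p (Cb F x u v w) z ≠ g z
    · rw [ind_true h]
      obtain ⟨hR, z, hz, hne⟩ := h
      have h2 := ((hp _ hR).sub hg).cube_zeros hz (sub_ne_zero.2 hne)
      have h3 : ∀ c, A u v w c = 1 - ind (p (Cb F x u v w) (x + (c.1 • u + c.2.1 • v + c.2.2 • w))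
          - g (x + (c.1 • u + c.2.1 • v + c.2.2 • w)) = 0) := fun c => by
        simp only [hA, ind_and, ind_true hR, one_mul, sub_eq_zero, ne_eq, ind_not]
      rw [E_congr h3, E_sub, E_const]
      have : 2 * (d : ℝ) / q ≤ 1 / 2 := by rw [div_le_iff₀ hq]; linarith
      linarith
    · rw [ind_false h]
      have : 0 ≤ 𝔼 c, A u v w c := E_nonneg fun c => ind_nonneg _
      linarith
  have h2 : ∀ c : F × F × F, 𝔼 u, 𝔼 v, 𝔼 w, A u v w c ≤ κ + mass x R * ind (c.1 = 0) := by
    intro c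
    by_cases hc : c.1 = 0
    · rw [ind_true hc]
      have : 𝔼 u, 𝔼 v, 𝔼 w, A u v w c ≤ mass x R :=
        E_mono fun u => E_mono fun v => E_mono fun w => ind_mono fun h => h.1
      linarith
    · rw [ind_false hc, mul_zero, add_zero, hκ]
      refine le_of_eq ?_
      have e1 : ∀ φ : V → V → V → ℝ, 𝔼 u, 𝔼 v, 𝔼 w, φ u v w = 𝔼 v, 𝔼 w, 𝔼 u, φ u v w :=
        fun φ => by rw [E_comm]; exact E_congr fun v => E_comm _
      rw [e1 (fun u v w => A u v w c), e1 (fun u v w => ind (R (Cb F x u v w) ∧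
        p (Cb F x u v w) (x + u) ≠ g (x + u)))]
      refine E_congr fun v => E_congr fun w => ?_
      rw [← E_shift (fun u => ind (R (Cb F x u v w) ∧ p (Cb F x u v w) (x + u) ≠ g (x + u)))
        (c.2.1 • v + c.2.2 • w), ← E_smul (fun u => ind (R (Cb F x (u + _) v w) ∧ _)) hc]
      refine E_congr fun u => ?_
      simp only [hA, ← add_assoc, Cb_smul x u v w hc]
  have h3 : 𝔼 c : F × F × F, ind (c.1 = 0) = 1 / q := by
    rw [E_prod (fun (a : F) (b : F × F) => ind (a = 0))]
    simp only [E_const]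
    rw [eq_div_iff hq.ne', mul_comm, card_mul_E_ind]
    simp
  calc mass x (fun C => R C ∧ ∃ z ∈ C, p C z ≠ g z)
      ≤ 𝔼 u, 𝔼 v, 𝔼 w, 2 * 𝔼 c, A u v w c := E_mono fun u => E_mono fun v => E_mono fun w => h1 u v w
    _ = 2 * 𝔼 c, 𝔼 u, 𝔼 v, 𝔼 w, A u v w c := by
        simp only [E_mul_left]
        rw [E_comm (fun c u => 𝔼 v, 𝔼 w, A u v w c)]
        congr 1
        refine E_congr fun u => ?_
        rw [E_comm (fun c v => 𝔼 w, A u v w c)]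
        exact E_congr fun v => E_comm _
    _ ≤ 2 * 𝔼 c : F × F × F, (κ + mass x R * ind (c.1 = 0)) := by
        have := E_mono h2; linarith
    _ = _ := by rw [E_add, E_mul_left, h3, E_const, mul_one_div]

/-- Local structure: if the subspaces through `x` satisfying `R` have noticeable mass and rarely
disagree on common planes through `x`, then nine tenths of them agree with one function of degree
at most `d`. -/
theorem local_structure (hd : 1 ≤ d) (hp : ∀ C, R C → LineDeg F d (p C))
    (hm : 4 * 10 ^ 6 * (d : ℝ) ^ 6 ≤ mass x R * Fintype.card F)
    (hb : 10 ^ 4 * (d : ℝ) ^ 3 * 𝔼 u, disagree x R p u ≤ mass x R ^ 2) :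
    ∃ g : V → F, LineDeg F d g ∧
      mass x (fun C => R C ∧ ∃ z ∈ C, p C z ≠ g z) ≤ mass x R / 10 := by
  classical
  obtain ⟨f, hf⟩ := local_majority hd hm hb
  have hd1 : (1 : ℝ) ≤ d := by exact_mod_cast hd
  have hd3 : (1 : ℝ) ≤ (d : ℝ) ^ 3 := one_le_pow₀ hd1
  have hd6 : (d : ℝ) ≤ (d : ℝ) ^ 6 := le_self_pow₀ hd1 (by norm_num)
  have hq := card_pos' (F := F)
  have hmle := mass_le_one x R
  have hmq : 0 < mass x R * Fintype.card F := lt_of_lt_of_le (by positivity) hm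
  have hm0 : 0 < mass x R := pos_of_mul_pos_left hmq hq.le
  have hcard : 4 * 10 ^ 6 * (d : ℝ) ≤ Fintype.card F := by nlinarith
  have hcard' : d + 2 ≤ Fintype.card F := by
    have : (d : ℝ) + 2 ≤ Fintype.card F := by linarith
    exact_mod_cast this
  obtain ⟨g, hg, hfg⟩ := rubinfeld_sudan hd hcard' f (r := 1 / (1000 * (d : ℝ) ^ 2))
    (by rw [one_div, inv_mul_cancel₀ (by positivity)])
    (fun S hS h0 => local_line_test hd hp hm hf hS h0)
  refine ⟨g, hg, (cube_agree hp hg (by linarith)).trans ?_⟩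
  set m := mass x R with hm'
  set q : ℝ := (Fintype.card F : ℝ) with hq'
  set e := 𝔼 u, 𝔼 v, 𝔼 w, ind (R (Cb F x u v w) ∧ p (Cb F x u v w) (x + u) ≠ f (x + u)) with he
  have he0 : 0 ≤ e := E_nonneg fun u => E_nonneg fun v => E_nonneg fun w => ind_nonneg _
  set L : V → ℝ := fun u => 𝔼 v, 𝔼 w, ind (R (Cb F x u v w)) with hL
  set ψ : V → ℝ := fun u => ind (f (x + u) ≠ g (x + u)) with hψ
  have h1 : 𝔼 u, 𝔼 v, 𝔼 w, ind (R (Cb F x u v w) ∧ p (Cb F x u v w) (x + u) ≠ g (x + u)) ≤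
      e + 𝔼 u, L u * ψ u := by
    rw [he, ← E_add]
    refine E_mono fun u => ?_
    rw [hL]
    simp only [← E_mul_right, ← E_add]
    refine E_mono fun v => E_mono fun w => ?_
    rw [hψ, ← ind_and]
    refine ind_le_add fun ⟨hR, hne⟩ => ?_
    by_contra! hcon
    exact hne ((hcon.1 hR).trans (hcon.2 hR))
  have hpt : ∀ u, m * (L u * ψ u) ≤ 2 * m ^ 2 * ψ u + 1 / 4 * (L u - m) ^ 2 := fun u => by
    have hBB : ψ u ^ 2 = ψ u := ind_sq _
    nlinarith [sq_nonneg ((L u - m) / 2 - m * ψ u)]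
  have hE := E_mono hpt
  simp only [E_add, E_mul_left] at hE
  have hρ : 𝔼 u, ψ u ≤ 1 / 500 := by
    have : 𝔼 u, ψ u = 𝔼 y, ind (f y ≠ g y) := E_shift_left (fun y => ind (f y ≠ g y)) x
    rw [this]
    refine hfg.trans ?_
    have h2 : (1 : ℝ) ≤ (d : ℝ) ^ 2 := one_le_pow₀ hd1
    rw [mul_one_div, div_le_iff₀ (by positivity)]
    linarith
  have hvar : 𝔼 u, (L u - m) ^ 2 ≤ m / q := by
    refine (mass_var_two (F := F) x R).trans ?_
    have := one_le_card' (F := F)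
    exact div_le_div_of_nonneg_left hm0.le hq (by nlinarith)
  have he1 : 10 ^ 5 * e ≤ 16 * m := by nlinarith
  have h1q : 1 / q ≤ m / (4 * 10 ^ 6) := by
    rw [div_le_div_iff₀ hq (by norm_num)]
    have : (1 : ℝ) ≤ (d : ℝ) ^ 6 := one_le_pow₀ hd1
    linarith
  have hmq1 : m / q = m * (1 / q) := by ring
  have hLψ : m * 𝔼 u, L u * ψ u ≤ m * (m * (1 / 250 + 1 / 100)) := by
    rw [hmq1] at hvar
    nlinarith
  have := le_of_mul_le_mul_left hLψ hm0
  have h5 : m / q ≤ m / (4 * 10 ^ 6) := by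
    rw [hmq1]; nlinarith
  linarith

end Local

/-! ### Second moments and concentration -/

section Global
variable {F V : Type*} [Field F] [AddCommGroup V] [Module F V] [Fintype V]

lemma E_four (φ : V → V → V → V → ℝ) :
    𝔼 t : V × V × V × V, φ t.1 t.2.1 t.2.2.1 t.2.2.2 = 𝔼 x, 𝔼 u, 𝔼 v, 𝔼 w, φ x u v w := by
  rw [E_prod (fun x (t : V × V × V) => φ x t.1 t.2.1 t.2.2)]
  refine E_congr fun x => ?_
  rw [E_prod (fun u (t : V × V) => φ x u t.1 t.2)]
  exact E_congr fun u => E_prod _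

lemma E_shear (Ψ : V → V → ℝ) (c : F) : 𝔼 x, 𝔼 u, Ψ (x + c • u) u = 𝔼 x, 𝔼 u, Ψ x u := by
  rw [E_comm, E_comm Ψ]
  exact E_congr fun u => E_shift (fun x => Ψ x u) (c • u)

variable [Fintype F]

lemma E_ind_zero : 𝔼 c : F, ind (c = 0) = 1 / Fintype.card F := by
  rw [eq_div_iff card_pos'.ne', mul_comm, card_mul_E_ind]
  simp

/-- A second-moment bound: two random points on a common random line of a random cube both
satisfy `W` with probability about `α ^ 2` at least, where `α` is the probability for one. By
Jensen the average over all pairs of points of the line is at least `α ^ 2`, and only the pairs of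
equal points are lost. -/
lemma second_moment (W : V → AffineSubspace F V → Prop) :
    (𝔼 x, mass x (W x)) ^ 2 - (𝔼 x, mass x (W x)) / Fintype.card F ≤
      𝔼 x, 𝔼 u, 𝔼 v, 𝔼 w, ind (W x (Cb F x u v w)) * ind (W (x + u) (Cb F x u v w)) := by
  classical
  set α := 𝔼 x, mass x (W x) with hα
  set q : ℝ := (Fintype.card F : ℝ) with hq
  set Z := 𝔼 x, 𝔼 u, 𝔼 v, 𝔼 w, ind (W x (Cb F x u v w)) * ind (W (x + u) (Cb F x u v w)) with hZ
  have hZ0 : 0 ≤ Z := E_nonneg fun x => E_nonneg fun u => E_nonneg fun v => E_nonneg fun w =>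
    mul_nonneg (ind_nonneg _) (ind_nonneg _)
  set Y : F → ℝ := fun c => 𝔼 x, 𝔼 u, 𝔼 v, 𝔼 w,
    ind (W x (Cb F x u v w)) * ind (W (x + c • u) (Cb F x u v w)) with hY
  have upper : ∀ c, Y c ≤ Z + α * ind (c = 0) := fun c => by
    by_cases hc : c = 0
    · rw [ind_true hc]
      have : Y c = α := by
        simp only [hY, hα, hc, zero_smul, add_zero, ← sq, ind_sq]; rfl
      linarith
    · rw [ind_false hc]
      have : Y c = Z := E_congr fun x => by
        rw [← E_smul (fun u => 𝔼 v, 𝔼 w,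
          ind (W x (Cb F x u v w)) * ind (W (x + u) (Cb F x u v w))) hc]
        refine E_congr fun u => E_congr fun v => E_congr fun w => ?_
        have := Cb_smul x u v w hc 0 0
        rw [zero_smul, zero_smul, add_zero, add_zero] at this
        rw [this]
      linarith
  have lower : α ^ 2 ≤ 𝔼 c, Y c := by
    have e1 : ∀ c' : F, 𝔼 c, Y c = 𝔼 c : F, 𝔼 t : V × V × V × V,
        ind (W (t.1 + c' • t.2.1) (Cb F t.1 t.2.1 t.2.2.1 t.2.2.2)) *
          ind (W (t.1 + c • t.2.1) (Cb F t.1 t.2.1 t.2.2.1 t.2.2.2)) := fun c' => by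
      rw [← E_shift_left (fun c : F => 𝔼 t : V × V × V × V,
        ind (W (t.1 + c' • t.2.1) (Cb F t.1 t.2.1 t.2.2.1 t.2.2.2)) *
          ind (W (t.1 + c • t.2.1) (Cb F t.1 t.2.1 t.2.2.1 t.2.2.2))) c']
      refine E_congr fun c => ?_
      rw [E_four (fun x u v w => ind (W (x + c' • u) (Cb F x u v w)) *
          ind (W (x + (c' + c) • u) (Cb F x u v w)))]
      change 𝔼 x, 𝔼 u, 𝔼 v, 𝔼 w, _ = _
      rw [← E_shear (fun x u => 𝔼 v, 𝔼 w,
        ind (W x (Cb F x u v w)) * ind (W (x + c • u) (Cb F x u v w))) c']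
      refine E_congr fun x => E_congr fun u => E_congr fun v => E_congr fun w => ?_
      have := Cb_base x u v w c' 0 0
      rw [zero_smul, zero_smul, add_zero, add_zero] at this
      rw [this, add_smul, add_assoc]
    have e2 : 𝔼 c, Y c = 𝔼 t : V × V × V × V,
        (𝔼 c : F, ind (W (t.1 + c • t.2.1) (Cb F t.1 t.2.1 t.2.2.1 t.2.2.2))) ^ 2 := by
      rw [← E_const (α := F) (𝔼 c, Y c), E_congr e1]
      simp only [sq, ← E_mul_E]
      rw [E_comm (α := V × V × V × V)]
      refine E_congr fun c' => E_comm _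
    rw [e2]
    refine le_trans (le_of_eq ?_) (sq_E_le _)
    congr 1
    rw [E_comm, ← E_const (α := F) α]
    refine E_congr fun c => ?_
    rw [E_four (fun x u v w => ind (W (x + c • u) (Cb F x u v w))), hα]
    simp only [mass]
    rw [← E_shear (fun x u => 𝔼 v, 𝔼 w, ind (W x (Cb F x u v w))) c]
    refine E_congr fun x => E_congr fun u => E_congr fun v => E_congr fun w => ?_
    have := Cb_base x u v w c 0 0
    rw [zero_smul, zero_smul, add_zero, add_zero] at this
    rw [this]
  have := E_mono upper
  rw [E_add, E_const, E_mul_left, E_ind_zero, mul_one_div] at this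
  linarith

/-- A condition `ψ` on one direction is almost independent of `R`: the mass of `R` restricted to it
is at most about `2 * mass x R` times the probability of `ψ`. -/
lemma mass_weight (x : V) (R : AffineSubspace F V → Prop) (ψ : V → Prop) :
    mass x R * 𝔼 u, (𝔼 v, 𝔼 w, ind (R (Cb F x u v w))) * ind (ψ u) ≤
      2 * mass x R ^ 2 * 𝔼 u, ind (ψ u) + 1 / 4 * (mass x R / (Fintype.card F : ℝ) ^ 2) := by
  set m := mass x R with hm
  have hpt : ∀ u, m * ((𝔼 v, 𝔼 w, ind (R (Cb F x u v w))) * ind (ψ u)) ≤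
      2 * m ^ 2 * ind (ψ u) + 1 / 4 * ((𝔼 v, 𝔼 w, ind (R (Cb F x u v w))) - m) ^ 2 := fun u => by
    have hBB : ind (ψ u) ^ 2 = ind (ψ u) := ind_sq _
    nlinarith [sq_nonneg (((𝔼 v, 𝔼 w, ind (R (Cb F x u v w))) - m) / 2 - m * ind (ψ u))]
  have hE := E_mono hpt
  simp only [E_add, E_mul_left] at hE
  have := mass_var_two (F := F) x R
  linarith

/-- The mass of a fixed predicate at a random point concentrates around its average. -/
lemma point_weight (S : AffineSubspace F V → Prop) (ψ : V → Prop) :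
    (𝔼 y, mass y S) * 𝔼 y, mass y S * ind (ψ y) ≤
      2 * (𝔼 y, mass y S) ^ 2 * 𝔼 y, ind (ψ y)
        + 1 / 4 * ((𝔼 y, mass y S) / (Fintype.card F : ℝ) ^ 2) := by
  have hvar := sampling_two (F := F) (fun y u v => 𝔼 w, ind (S (Cb F y u v w)))
    (fun _ _ _ => E_nonneg fun _ => ind_nonneg _) (fun _ _ _ => E_le fun _ => ind_le_one _)
    (fun b c y u v => E_congr fun w => by
      have := Cb_base y u v w b c 0
      rw [zero_smul, add_zero, ← add_assoc] at this
      rw [this])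
  change 𝔼 y, (mass y S - 𝔼 y', mass y' S) ^ 2 ≤ (𝔼 y, mass y S) / _ at hvar
  set m := 𝔼 y, mass y S with hm
  have hpt : ∀ y, m * (mass y S * ind (ψ y)) ≤
      2 * m ^ 2 * ind (ψ y) + 1 / 4 * (mass y S - m) ^ 2 := fun y => by
    have hBB : ind (ψ y) ^ 2 = ind (ψ y) := ind_sq _
    nlinarith [sq_nonneg ((mass y S - m) / 2 - m * ind (ψ y))]
  have hE := E_mono hpt
  simp only [E_add, E_mul_left] at hE
  linarith

/-- Two subspaces sharing two random directions satisfy `R` almost independently. -/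
lemma pair_mass_le (x : V) (R : AffineSubspace F V → Prop) :
    𝔼 u, 𝔼 v, (𝔼 w, ind (R (Cb F x u v w))) ^ 2 ≤
      mass x R ^ 2 + 2 * mass x R / Fintype.card F := by
  have h := mass_var (F := F) x R
  have e : ∀ u v, (𝔼 w, ind (R (Cb F x u v w))) ^ 2 = (𝔼 w, ind (R (Cb F x u v w)) - mass x R) ^ 2
      + (2 * mass x R * (𝔼 w, ind (R (Cb F x u v w))) - mass x R ^ 2) := fun u v => by ring
  simp only [E_congr fun u => E_congr fun v => e u v]
  simp only [E_add, E_sub, E_mul_left, E_const]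
  rw [show 𝔼 u, 𝔼 v, 𝔼 w, ind (R (Cb F x u v w)) = mass x R from rfl]
  linarith

variable {d : ℕ} {Q : AffineSubspace F V → Prop} {p : AffineSubspace F V → V → F}

/-- Disagreement is rare: two polynomials which differ on the line through `x` in direction `u`
coincide at no more than `d` points of it, and `x` is a random one of these points. -/
lemma sum_disagree_le (hp : ∀ C, Q C → LineDeg F d (p C)) :
    𝔼 x, ∑ σ, 𝔼 u, disagree x (fun C => Q C ∧ p C x = σ) p u ≤ d / Fintype.card F := by
  classical
  set Φ : V → V → V → V → V → ℝ := fun x u v w w' => ind (Q (Cb F x u v w)) *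
    ind (Q (Cb F x u v w')) * (ind (p (Cb F x u v w) x = p (Cb F x u v w') x) *
      ind (p (Cb F x u v w) (x + u) ≠ p (Cb F x u v w') (x + u))) with hΦ
  -- `Φ` marks two subspaces which agree at `x` and disagree at `x + u`
  have e1 : ∀ x, ∑ σ, 𝔼 u, disagree x (fun C => Q C ∧ p C x = σ) p u =
      𝔼 u, 𝔼 v, 𝔼 w, 𝔼 w', Φ x u v w w' := fun x => by
    simp only [disagree, ← E_sum]
    refine E_congr fun u => E_congr fun v => E_congr fun w => E_congr fun w' => ?_
    rw [Finset.sum_eq_single (p (Cb F x u v w) x)]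
    · rw [ind_and, ind_and, ind_true (rfl : p (Cb F x u v w) x = _)]
      simp only [hΦ, eq_comm (a := p (Cb F x u v w') x)]; ring
    · intro σ _ hσ
      rw [ind_and, ind_false (Ne.symm hσ)]; ring
    · simp
  rw [E_congr e1]
  have e2 : ∀ c : F, 𝔼 x, 𝔼 u, 𝔼 v, 𝔼 w, 𝔼 w', Φ x u v w w' =
      𝔼 x, 𝔼 u, 𝔼 v, 𝔼 w, 𝔼 w', Φ (x + c • u) u v w w' := fun c =>
    (E_shear (fun x u => 𝔼 v, 𝔼 w, 𝔼 w', Φ x u v w w') c).symm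
  rw [← E_const (α := F) (𝔼 x, 𝔼 u, 𝔼 v, 𝔼 w, 𝔼 w', Φ x u v w w'), E_congr e2]
  rw [E_comm]
  refine E_le fun x => ?_
  rw [E_comm]
  refine E_le fun u => ?_
  rw [E_comm]
  refine E_le fun v => ?_
  rw [E_comm]
  refine E_le fun w => ?_
  rw [E_comm]
  refine E_le fun w' => ?_
  have hbase : ∀ (c : F) w, Cb F (x + c • u) u v w = Cb F x u v w := fun c w => by
    have := Cb_base x u v w c 0 0
    rwa [zero_smul, zero_smul, add_zero, add_zero] at this
  simp only [hΦ, hbase]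
  set C := Cb F x u v w
  set C' := Cb F x u v w'
  have hdq : (0 : ℝ) ≤ d / Fintype.card F := by positivity
  by_cases hex : Q C ∧ Q C' ∧ ∃ c₀ : F, p C (x + c₀ • u) - p C' (x + c₀ • u) ≠ 0
  · obtain ⟨hC, hC', c₀, hc₀⟩ := hex
    refine (E_mono fun c => ?_).trans (((hp _ hC).sub (hp _ hC')).line_zeros x u hc₀)
    rw [← ind_and, ← ind_and, ← ind_and]
    exact ind_mono fun h => sub_eq_zero.2 h.2.1
  · refine le_trans (le_of_eq ?_) hdq
    rw [← E_const (α := F) (0 : ℝ)]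
    refine E_congr fun c => ?_
    rw [← ind_and, ← ind_and, ← ind_and]
    refine ind_false fun h => hex ⟨h.1.1, h.1.2, c + 1, sub_ne_zero.2 ?_⟩
    have := h.2.2
    rwa [add_smul, one_smul, ← add_assoc]

end Global

/-! ### Global structure -/

section Global2
variable {F V : Type*} [Field F] [AddCommGroup V] [Module F V] [Fintype V]

lemma mass_mono {x : V} {R R₁ : AffineSubspace F V → Prop} (h : ∀ C, R C → R₁ C) :
    mass x R ≤ mass x R₁ :=
  E_mono fun _ => E_mono fun _ => E_mono fun _ => ind_mono (h _)

lemma mass_le_add {x : V} {R R₁ R₂ : AffineSubspace F V → Prop} (h : ∀ C, R C → R₁ C ∨ R₂ C) :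
    mass x R ≤ mass x R₁ + mass x R₂ := by
  simp only [mass, ← E_add]
  exact E_mono fun _ => E_mono fun _ => E_mono fun _ => ind_le_add (h _)

variable [Fintype F]

/-- The value `σ` at `x` is exceptional if the cubes taking it have noticeable mass and rarely
disagree on planes through `x`. -/
def Exc (Q : AffineSubspace F V → Prop) (p : AffineSubspace F V → V → F) (d : ℕ) (ε : ℝ)
    (x : V) (σ : F) : Prop :=
  ε / 2 ≤ mass x (fun C => Q C ∧ p C x = σ) ∧
    10 ^ 4 * (d : ℝ) ^ 3 * 𝔼 u, disagree x (fun C => Q C ∧ p C x = σ) p u ≤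
      mass x (fun C => Q C ∧ p C x = σ) ^ 2

variable {d : ℕ} {Q : AffineSubspace F V → Prop} {p : AffineSubspace F V → V → F} {ε : ℝ}

lemma sum_mass (x : V) : ∑ σ, mass x (fun C => Q C ∧ p C x = σ) = mass x Q := by
  classical
  simp only [mass, ← E_sum]
  refine E_congr fun u => E_congr fun v => E_congr fun w => ?_
  rw [Finset.sum_eq_single (p (Cb F x u v w) x)]
  · simp
  · intro τ _ hτ; exact ind_false fun h => hτ h.2.symm
  · simp

/-- Values that are not exceptional contribute to the success of the test at most about `ε / 2`:
those of mass below `ε / 2` by concentration, the others by the rarity of disagreement. -/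
lemma exceptional_mass (hd : 1 ≤ d) (hp : ∀ C, Q C → LineDeg F d (p C)) (hε0 : 0 < ε)
    (hεq : 9 * 10 ^ 6 * (d : ℝ) ^ 6 ≤ ε * Fintype.card F)
    (hε : ε ≤ 𝔼 x, ∑ σ, 𝔼 u, 𝔼 v, (𝔼 w, ind (Q (Cb F x u v w) ∧ p (Cb F x u v w) x = σ)) ^ 2) :
    49 / 100 * ε ≤ 𝔼 x, ∑ σ, ind (Exc Q p d ε x σ) * mass x (fun C => Q C ∧ p C x = σ) := by
  set q : ℝ := (Fintype.card F : ℝ) with hq'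
  have hq : 0 < q := card_pos'
  have hd1 : (1 : ℝ) ≤ d := by exact_mod_cast hd
  have hpt : ∀ x σ, 𝔼 u, 𝔼 v, (𝔼 w, ind (Q (Cb F x u v w) ∧ p (Cb F x u v w) x = σ)) ^ 2 ≤
      ind (Exc Q p d ε x σ) * mass x (fun C => Q C ∧ p C x = σ) +
      ((ε / 2 + 2 / q) * mass x (fun C => Q C ∧ p C x = σ) +
      10 ^ 4 * (d : ℝ) ^ 3 * 𝔼 u, disagree x (fun C => Q C ∧ p C x = σ) p u) := fun x σ => by
    have h1 := pair_mass_le (F := F) x (fun C => Q C ∧ p C x = σ)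
    have hb0 : 0 ≤ 10 ^ 4 * (d : ℝ) ^ 3 * 𝔼 u, disagree x (fun C => Q C ∧ p C x = σ) p u := by
      refine mul_nonneg (by positivity) (E_nonneg fun u => ?_)
      exact E_nonneg fun v => E_nonneg fun w => E_nonneg fun w' =>
        mul_nonneg (mul_nonneg (ind_nonneg _) (ind_nonneg _)) (ind_nonneg _)
    have hm0 := mass_nonneg x (fun C => Q C ∧ p C x = σ)
    have hm1 := mass_le_one x (fun C => Q C ∧ p C x = σ)
    set m := mass x (fun C => Q C ∧ p C x = σ) with hm
    set b := 10 ^ 4 * (d : ℝ) ^ 3 * 𝔼 u, disagree x (fun C => Q C ∧ p C x = σ) p u with hb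
    have h2 : 2 * m / q = 2 / q * m := by ring
    rw [h2] at h1
    by_cases hE : Exc Q p d ε x σ
    · rw [ind_true hE]
      nlinarith
    · rw [ind_false hE]
      have : m < ε / 2 ∨ m ^ 2 < b := by
        by_contra! hcon; exact hE hcon
      rcases this with h | h
      · nlinarith
      · nlinarith
  have hE := E_mono fun x => Finset.sum_le_sum fun σ (_ : σ ∈ Finset.univ) => hpt x σ
  simp only [Finset.sum_add_distrib, ← Finset.mul_sum, E_add, E_mul_left, sum_mass] at hE
  have h1 : 𝔼 x, mass x Q ≤ 1 := E_le fun x => mass_le_one x Q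
  have h2 := sum_disagree_le (d := d) hp
  rw [← hq'] at h2
  have h3 : 10 ^ 4 * (d : ℝ) ^ 3 * (d / q) ≤ ε / 900 := by
    rw [mul_div_assoc', div_le_iff₀ hq]
    have : (d : ℝ) ^ 4 ≤ d ^ 6 := pow_le_pow_right₀ hd1 (by norm_num)
    nlinarith
  have h4 : 2 / q ≤ ε / (10 ^ 6) := by
    rw [div_le_iff₀ hq]
    have : (1 : ℝ) ≤ d ^ 6 := one_le_pow₀ hd1
    nlinarith
  have h5 : 10 ^ 4 * (d : ℝ) ^ 3 * 𝔼 x, ∑ σ, 𝔼 u, disagree x (fun C => Q C ∧ p C x = σ) p u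
      ≤ 10 ^ 4 * (d : ℝ) ^ 3 * (d / q) := mul_le_mul_of_nonneg_left h2 (by positivity)
  have h6 : (ε / 2 + 2 / q) * 𝔼 x, mass x Q ≤ (ε / 2 + 2 / q) * 1 :=
    mul_le_mul_of_nonneg_left h1 (by positivity)
  linarith

/-- Two functions of degree at most `d` rarely coincide at both `x + v` and `x + w`. -/
lemma two_zeros {H : V → F} (hH : LineDeg F d H) (x : V) :
    𝔼 v, 𝔼 w, ind ((∃ z, H z ≠ 0) ∧ H (x + v) = 0 ∧ H (x + w) = 0) ≤
      (2 * d / Fintype.card F) ^ 2 := by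
  by_cases hz : ∃ z, H z ≠ 0
  · obtain ⟨z, hz'⟩ := hz
    simp only [ind_and, ind_true (⟨z, hz'⟩ : ∃ z, H z ≠ 0), one_mul, E_mul_E]
    rw [E_shift_left (fun v => ind (H v = 0)), ← sq]
    exact pow_le_pow_left₀ (E_nonneg fun _ => ind_nonneg _) (hH.zeros hz') 2
  · refine le_trans (le_of_eq ?_) (sq_nonneg _)
    simp only [ind_and, ind_false hz, zero_mul, E_const]

set_option maxHeartbeats 2000000 in
/-- Global structure: a table whose entries at a random point agree for two random subspaces
with two common directions, with probability `ε`, agrees with one function of degree at most `d` on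
at least an `ε / 5` fraction of the subspaces. -/
theorem global_structure (hd : 1 ≤ d) (hp : ∀ C, Q C → LineDeg F d (p C)) (hε0 : 0 < ε)
    (hεq : 9 * 10 ^ 6 * (d : ℝ) ^ 6 ≤ ε * Fintype.card F)
    (hε : ε ≤ 𝔼 x, ∑ σ, 𝔼 u, 𝔼 v, (𝔼 w, ind (Q (Cb F x u v w) ∧ p (Cb F x u v w) x = σ)) ^ 2) :
    ∃ g : V → F, LineDeg F d g ∧
      ε / 5 ≤ 𝔼 x, mass x (fun C => Q C ∧ ∀ z ∈ C, p C z = g z) := by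
  classical
  have hexc := exceptional_mass hd hp hε0 hεq hε
  have hq : (0 : ℝ) < Fintype.card F := card_pos'
  have hd1 : (1 : ℝ) ≤ d := by exact_mod_cast hd
  have hlocal : ∀ x σ, ∃ g : V → F, LineDeg F d g ∧ (Exc Q p d ε x σ →
      mass x (fun C => (Q C ∧ p C x = σ) ∧ ∃ z ∈ C, p C z ≠ g z) ≤
        mass x (fun C => Q C ∧ p C x = σ) / 10) := fun x σ => by
    by_cases hE : Exc Q p d ε x σ
    · obtain ⟨g, hg, hg'⟩ := local_structure (R := fun C => Q C ∧ p C x = σ) hd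
        (fun C hC => hp C hC.1) (by
          refine le_trans ?_ (mul_le_mul_of_nonneg_right hE.1 hq.le)
          have : (0 : ℝ) ≤ d ^ 6 := by positivity
          linarith) hE.2
      exact ⟨g, hg, fun _ => hg'⟩
    · exact ⟨fun _ => 0, fun y h => ⟨0, by simp, by simp⟩, fun h => absurd h hE⟩
  choose g hg hgE using hlocal
  set q : ℝ := (Fintype.card F : ℝ) with hq'
  -- `RN x σ`: subspaces with the value `σ` at `x` which agree with the local function `g x σ`
  set m : V → F → ℝ := fun x σ => mass x (fun C => Q C ∧ p C x = σ) with hm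
  set RN : V → F → AffineSubspace F V → Prop :=
    fun x σ C => (Q C ∧ p C x = σ) ∧ ∀ z ∈ C, p C z = g x σ z with hRN
  set N : V → F → ℝ := fun x σ => mass x (RN x σ) with hN
  have hN1 : ∀ x σ, Exc Q p d ε x σ → 9 / 10 * m x σ ≤ N x σ := fun x σ hE => by
    have h1 : m x σ ≤ N x σ + mass x (fun C => (Q C ∧ p C x = σ) ∧ ∃ z ∈ C, p C z ≠ g x σ z) :=
      mass_le_add fun C hC => by
        by_cases h : ∀ z ∈ C, p C z = g x σ z
        · exact Or.inl ⟨hC, h⟩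
        · push Not at h; exact Or.inr ⟨hC, h⟩
    have h2 := hgE x σ hE
    change _ ≤ m x σ / 10 at h2
    linarith
  have hN2 : ∀ x σ, Exc Q p d ε x σ → 45 / 100 * ε ≤ N x σ := fun x σ hE => by
    have h1 := hN1 x σ hE
    have h2 : ε / 2 ≤ m x σ := hE.1
    linarith
  -- `W x C`: `C` takes an exceptional value at `x` and agrees with the corresponding local function
  set W : V → AffineSubspace F V → Prop := fun x C =>
    Q C ∧ Exc Q p d ε x (p C x) ∧ ∀ z ∈ C, p C z = g x (p C x) z with hW
  have hWN : ∀ x, mass x (W x) = ∑ σ, ind (Exc Q p d ε x σ) * N x σ := fun x => by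
    simp only [hN, mass, ← E_mul_left, ← E_sum]
    refine E_congr fun u => E_congr fun v => E_congr fun w => ?_
    rw [Finset.sum_eq_single (p (Cb F x u v w) x)]
    · rw [← ind_and]
      refine ind_congr ?_
      simp only [hW, hRN]; tauto
    · intro τ _ hτ
      rw [← ind_and]; exact ind_false fun h => hτ h.2.1.2.symm
    · simp
  set α := 𝔼 x, mass x (W x) with hα
  set K := 𝔼 x, ∑ σ, ind (Exc Q p d ε x σ) with hK
  have hαε : 44 / 100 * ε ≤ α := by
    have h1 : 9 / 10 * 𝔼 x, ∑ σ, ind (Exc Q p d ε x σ) * m x σ ≤ α := by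
      rw [hα, ← E_mul_left]
      refine E_mono fun x => ?_
      rw [hWN, Finset.mul_sum]
      refine Finset.sum_le_sum fun σ _ => ?_
      by_cases hE : Exc Q p d ε x σ
      · rw [ind_true hE]; linarith [hN1 x σ hE]
      · rw [ind_false hE]; simp
    linarith
  have hα0 : 0 < α := by linarith
  have hKα : 45 / 100 * ε * K ≤ α := by
    rw [hα, hK, ← E_mul_left]
    refine E_mono fun x => ?_
    rw [hWN, Finset.mul_sum]
    refine Finset.sum_le_sum fun σ _ => ?_
    by_cases hE : Exc Q p d ε x σ
    · rw [ind_true hE]; linarith [hN2 x σ hE]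
    · rw [ind_false hE]; simp
  have hZ := second_moment W
  rw [← hα, ← hq'] at hZ
  -- `X g₀ y`: the value `g₀ y` is exceptional at `y` and its local function is `g₀` itself
  set X : (V → F) → V → Prop := fun g₀ y => Exc Q p d ε y (g₀ y) ∧ g y (g₀ y) = g₀ with hX
  set J : V → F → ℝ := fun x σ =>
    𝔼 u, (𝔼 v, 𝔼 w, ind (RN x σ (Cb F x u v w))) * ind (X (g x σ) (x + u)) with hJ
  -- two exceptional values on the same cube usually come with the same function
  have hsplit : 𝔼 x, 𝔼 u, 𝔼 v, 𝔼 w, ind (W x (Cb F x u v w)) * ind (W (x + u) (Cb F x u v w)) ≤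
      𝔼 x, ∑ σ, ind (Exc Q p d ε x σ) * J x σ + K * (2 * d / q) ^ 2 := by
    rw [hK, ← E_mul_right, ← E_add]
    refine E_mono fun x => ?_
    rw [Finset.sum_mul, ← Finset.sum_add_distrib]
    have h1 : ∀ σ, ind (Exc Q p d ε x σ) * 𝔼 u, 𝔼 v, 𝔼 w,
        (ind (RN x σ (Cb F x u v w)) * ind (X (g x σ) (x + u)) +
        ind ((∃ z, g x σ z - g (x + u) (g x σ (x + u)) z ≠ 0) ∧
          g x σ (x + v) - g (x + u) (g x σ (x + u)) (x + v) = 0 ∧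
          g x σ (x + w) - g (x + u) (g x σ (x + u)) (x + w) = 0)) ≤
        ind (Exc Q p d ε x σ) * J x σ + ind (Exc Q p d ε x σ) * (2 * d / q) ^ 2 := fun σ => by
      rw [← mul_add]
      refine mul_le_mul_of_nonneg_left ?_ (ind_nonneg _)
      simp only [E_add, hJ, E_mul_right]
      have : 𝔼 u : V, 𝔼 v, 𝔼 w, ind ((∃ z, g x σ z - g (x + u) (g x σ (x + u)) z ≠ 0) ∧
          g x σ (x + v) - g (x + u) (g x σ (x + u)) (x + v) = 0 ∧
          g x σ (x + w) - g (x + u) (g x σ (x + u)) (x + w) = 0) ≤ (2 * d / q) ^ 2 :=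
        E_le fun u => two_zeros ((hg x σ).sub (hg (x + u) (g x σ (x + u)))) x
      linarith
    refine le_trans ?_ (Finset.sum_le_sum fun σ _ => h1 σ)
    simp only [← E_mul_left, ← E_sum]
    refine E_mono fun u => E_mono fun v => E_mono fun w => ?_
    rw [← ind_and]
    set C := Cb F x u v w with hC
    by_cases hWW : W x C ∧ W (x + u) C
    · refine le_trans ?_ (Finset.single_le_sum (fun σ _ => mul_nonneg (ind_nonneg _)
        (add_nonneg (mul_nonneg (ind_nonneg _) (ind_nonneg _)) (ind_nonneg _)))
        (Finset.mem_univ (p C x)))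
      obtain ⟨⟨hQ, hE, hgx⟩, -, hE', hgu⟩ := id hWW
      rw [ind_true hE, one_mul, ← ind_and]
      refine ind_le_add fun _ => ?_
      have hu : x + u ∈ C := mem_Cb.2 ⟨1, 0, 0, by simp⟩
      have hv : x + v ∈ C := mem_Cb.2 ⟨0, 1, 0, by simp⟩
      have hw : x + w ∈ C := mem_Cb.2 ⟨0, 0, 1, by simp⟩
      have hpu := hgx _ hu
      rw [hpu] at hE' hgu
      by_cases heq : g (x + u) (g x (p C x) (x + u)) = g x (p C x)
      · exact Or.inl ⟨⟨⟨hQ, rfl⟩, hgx⟩, hE', heq⟩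
      · refine Or.inr ⟨?_, ?_, ?_⟩
        · by_contra! hcon
          exact heq (funext fun z => (sub_eq_zero.1 (hcon z)).symm)
        · rw [← hgx _ hv, ← hgu _ hv, sub_self]
        · rw [← hgx _ hw, ← hgu _ hw, sub_self]
    · rw [ind_false hWW]
      exact Finset.sum_nonneg fun σ _ => mul_nonneg (ind_nonneg _)
        (add_nonneg (mul_nonneg (ind_nonneg _) (ind_nonneg _)) (ind_nonneg _))
  set κ : ℝ := 1 / q with hκ
  have hκ0 : 0 < κ := by positivity
  have hκε : 9 * 10 ^ 6 * (d : ℝ) ^ 6 * κ ≤ ε := by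
    rw [hκ, mul_one_div, div_le_iff₀ hq]; exact hεq
  have hκε1 : 9 * 10 ^ 6 * κ ≤ ε := by
    have : (1 : ℝ) ≤ (d : ℝ) ^ 6 := one_le_pow₀ hd1
    nlinarith
  have hκε2 : 9 * 10 ^ 6 * (d : ℝ) ^ 2 * κ ≤ ε := by
    have : (d : ℝ) ^ 2 ≤ (d : ℝ) ^ 6 := pow_le_pow_right₀ hd1 (by norm_num)
    nlinarith
  have hK0 : 0 ≤ K := E_nonneg fun x => Finset.sum_nonneg fun σ _ => ind_nonneg _
  have hgood : 9 / 10 * α ^ 2 ≤ 𝔼 x, ∑ σ, ind (Exc Q p d ε x σ) * J x σ := by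
    have h1 : K * (2 * d / q) ^ 2 ≤ κ * α := by
      have e : K * (2 * d / q) ^ 2 = 4 * κ * (K * ((d : ℝ) ^ 2 * κ)) := by rw [hκ]; ring
      have h2 : K * (9 * 10 ^ 6 * (d : ℝ) ^ 2 * κ) ≤ K * ε := mul_le_mul_of_nonneg_left hκε2 hK0
      have h3 : K * ((d : ℝ) ^ 2 * κ) ≤ α / 4 := by nlinarith
      rw [e]; nlinarith
    have h2 : α / q = κ * α := by rw [hκ]; ring
    rw [h2] at hZ
    have h3 : κ * α ≤ 1 / 100 * α ^ 2 := by nlinarith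
    have h4 := hZ.trans hsplit
    have h5 : α ^ 2 - 2 * (κ * α) ≤ 𝔼 x, ∑ σ, ind (Exc Q p d ε x σ) * J x σ := by linarith
    have h6 : 0 ≤ α ^ 2 := sq_nonneg α
    linarith
  -- a pair `(x, σ)` for which the local function is shared at least as often as on average
  obtain ⟨x, σ, hE, hJN⟩ : ∃ x σ, Exc Q p d ε x σ ∧ 8 / 10 * α * N x σ < J x σ := by
    by_contra! hcon
    have h1 : 𝔼 x, ∑ σ, ind (Exc Q p d ε x σ) * J x σ ≤ 8 / 10 * α * α := by
      conv_rhs => rw [hα]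
      rw [← hα, ← E_mul_left]
      refine E_mono fun x => ?_
      rw [hWN, Finset.mul_sum]
      refine Finset.sum_le_sum fun σ _ => ?_
      by_cases hE : Exc Q p d ε x σ
      · rw [ind_true hE]; linarith [hcon x σ hE]
      · rw [ind_false hE]; simp
    nlinarith
  refine ⟨g x σ, hg x σ, ?_⟩
  set S : AffineSubspace F V → Prop := fun C => Q C ∧ ∀ z ∈ C, p C z = g x σ z with hS
  set ν := 𝔼 y, ind (X (g x σ) y) with hν
  have hNε := hN2 x σ hE
  have hN0 : 0 < N x σ := by linarith
  -- the same function `g x σ` is the local one at a fraction of about `ε` of all points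
  have hνε : 17 / 100 * ε ≤ ν := by
    have h1 := mass_weight (F := F) x (RN x σ) (fun u => X (g x σ) (x + u))
    rw [E_shift_left (fun y => ind (X (g x σ) y)), ← hq'] at h1
    change N x σ * J x σ ≤ 2 * N x σ ^ 2 * ν + 1 / 4 * (N x σ / q ^ 2) at h1
    have e : N x σ / q ^ 2 = N x σ * κ ^ 2 := by rw [hκ]; ring
    rw [e] at h1
    have h2 : J x σ ≤ 2 * N x σ * ν + 1 / 4 * κ ^ 2 := by
      refine le_of_mul_le_mul_left ?_ hN0
      linarith
    have h3 : κ ^ 2 ≤ 1 / 100 * (α * N x σ) := by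
      have a1 : 10 * κ ≤ α := by linarith
      have a2 : 10 * κ ≤ N x σ := by linarith
      have a3 := mul_le_mul a1 a2 (by positivity) hα0.le
      linarith
    have h4 : N x σ * (79 / 100 * α) ≤ N x σ * (2 * ν) := by
      have hαN : 0 ≤ α * N x σ := mul_nonneg hα0.le hN0.le
      linarith only [hJN, h2, h3, hαN]
    have := le_of_mul_le_mul_left h4 hN0
    linarith
  have hν0 : 0 < ν := by linarith
  have h1 := point_weight (F := F) S (X (g x σ))
  rw [← hq'] at h1
  set s := 𝔼 y, mass y S with hs
  set U := 𝔼 y, mass y S * ind (X (g x σ) y) with hU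
  -- at each such point the subspaces agreeing with `g x σ` have mass at least `0.45 ε`
  have hUν : 45 / 100 * ε * ν ≤ U := by
    rw [hν, hU, ← E_mul_left]
    refine E_mono fun y => ?_
    by_cases hy : X (g x σ) y
    · rw [ind_true hy, mul_one, mul_one]
      refine (hN2 y _ hy.1).trans (mass_mono fun C hC => ⟨hC.1.1, ?_⟩)
      have := hC.2
      rwa [hy.2] at this
    · rw [ind_false hy]; simp
  have hUs : U ≤ s := E_mono fun y => mul_le_of_le_one_right (mass_nonneg y S) (ind_le_one _)
  have hs0 : 0 < s := by
    have : 0 < 45 / 100 * ε * ν := by positivity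
    linarith
  have e : s / q ^ 2 = s * κ ^ 2 := by rw [hκ]; ring
  rw [e] at h1
  have h2 : U ≤ 2 * s * ν + 1 / 4 * κ ^ 2 := by
    refine le_of_mul_le_mul_left ?_ hs0
    change s * U ≤ 2 * s ^ 2 * ν + 1 / 4 * (s * κ ^ 2) at h1
    linarith
  have h3 : κ ^ 2 ≤ 1 / 100 * (ε * ν) := by
    have a1 : 10 * κ ≤ ε := by linarith
    have a2 : 10 * κ ≤ ν := by linarith
    have a3 := mul_le_mul a1 a2 (by positivity) hε0.le
    linarith
  have h4 : ν * (ε / 5) ≤ ν * s := by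
    have hεν : 0 ≤ ε * ν := by positivity
    linarith only [hUν, h2, h3, hεν]
  exact le_of_mul_le_mul_left h4 hν0

end Global2

/-! ### Counting parametrizations of cubes and of pairs of cubes -/

section Counting

/-- Counting through a map whose fibers over the elements of interest all have `K` elements. -/
lemma ncard_fibers {α β : Type*} [Finite α] [Finite β] (φ : α → β) (S P : β → Prop) (K : ℕ)
    (hK : ∀ b, S b → {a | φ a = b}.ncard = K) :
    {a | S (φ a) ∧ P (φ a)}.ncard = K * {b | S b ∧ P b}.ncard := by
  classical
  cases nonempty_fintype α
  cases nonempty_fintype β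
  have h1 : {a | S (φ a) ∧ P (φ a)}.ncard = (Finset.univ.filter fun a => S (φ a) ∧ P (φ a)).card := by
    rw [← Set.ncard_coe_finset]; congr 1; ext; simp
  have h2 : {b | S b ∧ P b}.ncard = (Finset.univ.filter fun b => S b ∧ P b).card := by
    rw [← Set.ncard_coe_finset]; congr 1; ext; simp
  rw [h1, h2, mul_comm, ← smul_eq_mul, ← Finset.sum_const, Finset.card_eq_sum_card_fiberwise
    (f := φ) (t := Finset.univ.filter fun b => S b ∧ P b)
    (fun a ha => by simpa using ha)]
  refine Finset.sum_congr rfl fun b hb => ?_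
  rw [Finset.mem_filter] at hb
  rw [← hK b hb.2.1, ← Set.ncard_coe_finset]
  congr 1
  ext a
  simp only [Finset.coe_filter, Finset.mem_filter, Finset.mem_univ, true_and, Set.mem_ofPred_eq]
  exact ⟨fun h => h.2, fun h => ⟨h ▸ hb.2, h⟩⟩

variable {F V : Type*} [Field F] [Fintype F] [AddCommGroup V] [Module F V] [Fintype V]

lemma ncard_submodule (D : Submodule F V) :
    (D : Set V).ncard = Fintype.card F ^ Module.finrank F D := by
  classical
  rw [← Nat.card_coe_set_eq, ← Nat.card_eq_fintype_card]
  exact Module.natCard_eq_pow_finrank (K := F) (V := D)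

lemma ncard_affine {C : AffineSubspace F V} {x : V} (hx : x ∈ C) :
    (C : Set V).ncard = Fintype.card F ^ Module.finrank F C.direction := by
  rw [← ncard_submodule]
  have h : (C : Set V) = (fun v => v + x) '' (C.direction : Set V) := by
    ext z
    simp only [Set.mem_image, SetLike.mem_coe]
    constructor
    · intro hz
      exact ⟨z - x, AffineSubspace.vsub_mem_direction hz hx, sub_add_cancel z x⟩
    · rintro ⟨v, hv, rfl⟩
      exact AffineSubspace.vadd_mem_of_mem_direction hv hx
  rw [h, Set.ncard_image_of_injective _ (add_left_injective x)]

lemma ncard_pairs (D : Submodule F V) (hD : 2 ≤ Module.finrank F D) :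
    {t : V × V | t.1 ∈ D ∧ t.2 ∈ D ∧ LinearIndependent F ![t.1, t.2]}.ncard =
      ∏ i : Fin 2, (Fintype.card F ^ Module.finrank F D - Fintype.card F ^ i.val) := by
  classical
  rw [← card_linearIndependent hD, ← Nat.card_coe_set_eq]
  have key : ∀ s : Fin 2 → D, LinearIndependent F s ↔ LinearIndependent F ![(s 0 : V), s 1] := by
    intro s
    rw [← LinearMap.linearIndependent_iff D.subtype D.ker_subtype]
    have : ⇑D.subtype ∘ s = ![(s 0 : V), s 1] := by ext i; fin_cases i <;> rfl
    rw [this]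
  refine Nat.card_congr ⟨fun t => ⟨![⟨t.1.1, t.2.1⟩, ⟨t.1.2, t.2.2.1⟩], (key _).2 t.2.2.2⟩,
    fun s => ⟨(s.1 0, s.1 1), (s.1 0).2, (s.1 1).2, (key _).1 s.2⟩, fun t => rfl, fun s => ?_⟩
  ext i; fin_cases i <;> rfl

lemma ncard_triples (D : Submodule F V) (hD : 3 ≤ Module.finrank F D) :
    {t : V × V × V | t.1 ∈ D ∧ t.2.1 ∈ D ∧ t.2.2 ∈ D ∧
      LinearIndependent F ![t.2.2, t.1, t.2.1]}.ncard =
      ∏ i : Fin 3, (Fintype.card F ^ Module.finrank F D - Fintype.card F ^ i.val) := by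
  classical
  rw [← card_linearIndependent hD, ← Nat.card_coe_set_eq]
  have key : ∀ s : Fin 3 → D,
      LinearIndependent F s ↔ LinearIndependent F ![(s 0 : V), s 1, s 2] := by
    intro s
    rw [← LinearMap.linearIndependent_iff D.subtype D.ker_subtype]
    have : ⇑D.subtype ∘ s = ![(s 0 : V), s 1, s 2] := by ext i; fin_cases i <;> rfl
    rw [this]
  refine Nat.card_congr ⟨fun t => ⟨![⟨t.1.2.2, t.2.2.2.1⟩, ⟨t.1.1, t.2.1⟩, ⟨t.1.2.1, t.2.2.1⟩],
    (key _).2 t.2.2.2.2⟩, fun s => ⟨(s.1 1, s.1 2, s.1 0), (s.1 1).2, (s.1 2).2, (s.1 0).2,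
    (key _).1 s.2⟩, fun t => rfl, fun s => ?_⟩
  ext i; fin_cases i <;> rfl

lemma ncard_quadruples (hV : 4 ≤ Module.finrank F V) :
    {t : (V × V) × V × V | LinearIndependent F ![t.2.2, t.2.1, t.1.1, t.1.2]}.ncard =
      ∏ i : Fin 4, (Fintype.card F ^ Module.finrank F V - Fintype.card F ^ i.val) := by
  classical
  rw [← card_linearIndependent hV, ← Nat.card_coe_set_eq]
  have key : ∀ s : Fin 4 → V, s = ![s 0, s 1, s 2, s 3] := by
    intro s; ext i; fin_cases i <;> rfl
  exact Nat.card_congr ⟨fun t => ⟨![t.1.2.2, t.1.2.1, t.1.1.1, t.1.1.2], t.2⟩,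
    fun s => ⟨((s.1 2, s.1 3), s.1 1, s.1 0), by
      have := s.2; rw [key s.1] at this; exact this⟩, fun t => rfl,
    fun s => Subtype.ext (key s.1).symm⟩

lemma range_three (u v w : V) : Set.range ![w, u, v] = {u, v, w} := by
  simp only [Matrix.range_cons, Matrix.range_empty, Set.union_empty]
  ext; simp; tauto

lemma range_two (u v : V) : Set.range ![u, v] = {u, v} := by
  simp only [Matrix.range_cons, Matrix.range_empty, Set.union_empty]
  ext; simp; tauto

lemma direction_Cb (x u v w : V) : (Cb F x u v w).direction = Submodule.span F {u, v, w} :=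
  AffineSubspace.direction_mk' _ _

lemma indep_three {u v w : V} :
    LinearIndependent F ![w, u, v] ↔ Module.finrank F (Submodule.span F {u, v, w}) = 3 := by
  rw [linearIndependent_iff_card_eq_finrank_span, range_three, Fintype.card_fin, eq_comm]
  rfl

/-- The parametrizations of a given 3-dimensional affine subspace. -/
lemma Cb_eq_iff {C : AffineSubspace F V} (hC : Module.finrank F C.direction = 3) {x u v w : V} :
    Cb F x u v w = C ↔ x ∈ C ∧ u ∈ C.direction ∧ v ∈ C.direction ∧ w ∈ C.direction ∧
      LinearIndependent F ![w, u, v] := by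
  rw [indep_three]
  constructor
  · rintro rfl
    rw [direction_Cb] at hC ⊢
    exact ⟨AffineSubspace.self_mem_mk' _ _, Submodule.subset_span (by simp),
      Submodule.subset_span (by simp), Submodule.subset_span (by simp), hC⟩
  · rintro ⟨hx, hu, hv, hw, h⟩
    have : Submodule.span F {u, v, w} = C.direction := by
      refine Submodule.eq_of_le_of_finrank_eq (Submodule.span_le.2 ?_) (h.trans hC.symm)
      rintro z (rfl | rfl | rfl) <;> assumption
    rw [Cb, this, AffineSubspace.mk'_eq hx]

/-- Each cube is parametrized by the same number of tuples `(x, u, v, w)`. -/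
lemma ncard_fiber_cube {C : AffineSubspace F V} (hne : (C : Set V).Nonempty)
    (hC : Module.finrank F C.direction = 3) :
    {t : V × V × V × V | Cb F t.1 t.2.1 t.2.2.1 t.2.2.2 = C}.ncard =
      Fintype.card F ^ 3 * ∏ i : Fin 3, (Fintype.card F ^ 3 - Fintype.card F ^ i.val) := by
  obtain ⟨x, hx⟩ := hne
  have h1 := ncard_affine (F := F) hx
  have h2 := ncard_triples (F := F) C.direction hC.ge
  rw [hC] at h1 h2
  rw [← h2]
  conv_rhs => rw [← h1]
  rw [← Set.ncard_prod]
  congr 1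
  ext t
  exact Cb_eq_iff hC

/-- Extending a basis of a plane to a basis of a 3-dimensional space. -/
lemma indep_extend {D : Submodule F V} (hD : Module.finrank F D = 2) {u v w : V} (hu : u ∈ D)
    (hv : v ∈ D) : LinearIndependent F ![w, u, v] ↔ LinearIndependent F ![u, v] ∧ w ∉ D := by
  have h : LinearIndependent F ![w, u, v] ↔
      LinearIndependent F ![u, v] ∧ w ∉ Submodule.span F (Set.range ![u, v]) :=
    linearIndependent_finCons
  rw [h]
  refine and_congr_right fun hi => ?_
  have : Submodule.span F (Set.range ![u, v]) = D := by
    refine Submodule.eq_of_le_of_finrank_eq (Submodule.span_le.2 ?_) ?_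
    · rw [range_two]; rintro z (rfl | rfl) <;> assumption
    · rw [finrank_span_eq_card hi, hD, Fintype.card_fin]
  rw [this]

/-- Each pair of cubes meeting in a plane is parametrized by the same number of tuples
`(x, u, v, w, w')`: `x` in the plane, `u`, `v` a basis of its direction, and `w`, `w'` completing
it. -/
lemma ncard_fiber_pair {C₁ C₂ : AffineSubspace F V} (h₁ : Module.finrank F C₁.direction = 3)
    (h₂ : Module.finrank F C₂.direction = 3)
    (hne : ((C₁ ⊓ C₂ : AffineSubspace F V) : Set V).Nonempty)
    (h₁₂ : Module.finrank F (C₁ ⊓ C₂ : AffineSubspace F V).direction = 2) :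
    {t : V × (V × V) × V × V | (Cb F t.1 t.2.1.1 t.2.1.2 t.2.2.1,
      Cb F t.1 t.2.1.1 t.2.1.2 t.2.2.2) = (C₁, C₂)}.ncard =
      Fintype.card F ^ 2 * ((∏ i : Fin 2, (Fintype.card F ^ 2 - Fintype.card F ^ i.val)) *
        ((Fintype.card F ^ 3 - Fintype.card F ^ 2) *
          (Fintype.card F ^ 3 - Fintype.card F ^ 2))) := by
  obtain ⟨x, hx⟩ := hne
  have a0 := ncard_affine (F := F) hx
  have hdir : (C₁ ⊓ C₂ : AffineSubspace F V).direction = C₁.direction ⊓ C₂.direction :=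
    AffineSubspace.direction_inf_of_mem hx.1 hx.2
  rw [h₁₂] at a0
  set D := (C₁ ⊓ C₂ : AffineSubspace F V).direction with hD
  have hD₁ : D ≤ C₁.direction := hdir ▸ inf_le_left
  have hD₂ : D ≤ C₂.direction := hdir ▸ inf_le_right
  have a1 := ncard_pairs (F := F) D h₁₂.ge
  have a2 := Set.ncard_sdiff (SetLike.coe_subset_coe.2 hD₁) (Set.toFinite _)
  have a3 := Set.ncard_sdiff (SetLike.coe_subset_coe.2 hD₂) (Set.toFinite _)
  rw [ncard_submodule, ncard_submodule, h₁, h₁₂] at a2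
  rw [ncard_submodule, ncard_submodule, h₂, h₁₂] at a3
  rw [h₁₂] at a1
  have e : ((C₁ ⊓ C₂ : AffineSubspace F V) : Set V).ncard *
      ({t : V × V | t.1 ∈ D ∧ t.2 ∈ D ∧ LinearIndependent F ![t.1, t.2]}.ncard *
        (((C₁.direction : Set V) \ D).ncard * ((C₂.direction : Set V) \ D).ncard)) =
      Fintype.card F ^ 2 * ((∏ i : Fin 2, (Fintype.card F ^ 2 - Fintype.card F ^ i.val)) *
        ((Fintype.card F ^ 3 - Fintype.card F ^ 2) *
          (Fintype.card F ^ 3 - Fintype.card F ^ 2))) := by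
    rw [a0, a1, a2, a3]
  rw [← e]
  rw [← Set.ncard_prod, ← Set.ncard_prod, ← Set.ncard_prod]
  congr 1
  ext ⟨y, ⟨u, v⟩, w, w'⟩
  simp only [Set.mem_ofPred_eq, Prod.mk.injEq, Cb_eq_iff h₁, Cb_eq_iff h₂, Set.mem_prod,
    Set.mem_sdiff, SetLike.mem_coe, AffineSubspace.mem_inf_iff]
  have hmem : ∀ z, z ∈ D ↔ z ∈ C₁.direction ∧ z ∈ C₂.direction := fun z => by
    rw [hdir, Submodule.mem_inf]
  constructor
  · rintro ⟨⟨hy, hu, hv, hw, hi⟩, hy', hu', hv', hw', hi'⟩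
    have hu'' := (hmem u).2 ⟨hu, hu'⟩
    have hv'' := (hmem v).2 ⟨hv, hv'⟩
    rw [indep_extend h₁₂ hu'' hv''] at hi hi'
    exact ⟨⟨hy, hy'⟩, ⟨hu'', hv'', hi.1⟩, ⟨hw, hi.2⟩, hw', hi'.2⟩
  · rintro ⟨⟨hy, hy'⟩, ⟨hu, hv, hi⟩, ⟨hw, hwD⟩, hw', hwD'⟩
    exact ⟨⟨hy, hD₁ hu, hD₁ hv, hw, (indep_extend h₁₂ hu hv).2 ⟨hi, hwD⟩⟩,
      hy', hD₂ hu, hD₂ hv, hw', (indep_extend h₁₂ hu hv).2 ⟨hi, hwD'⟩⟩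

end Counting

/-! ### Independence of four random directions -/

section Final

lemma E_five {V : Type*} [Fintype V] (φ : V → V → V → V → V → ℝ) :
    𝔼 t : V × (V × V) × V × V, φ t.1 t.2.1.1 t.2.1.2 t.2.2.1 t.2.2.2 =
      𝔼 x, 𝔼 u, 𝔼 v, 𝔼 w, 𝔼 w', φ x u v w w' := by
  rw [E_prod (fun x (t : (V × V) × V × V) => φ x t.1.1 t.1.2 t.2.1 t.2.2)]
  refine E_congr fun x => ?_
  rw [E_prod (fun (s : V × V) (t : V × V) => φ x s.1 s.2 t.1 t.2),
    E_prod (fun u v => 𝔼 t : V × V, φ x u v t.1 t.2)]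
  exact E_congr fun u => E_congr fun v => E_prod _

variable {F V : Type*} [Field F] [Fintype F] [AddCommGroup V] [Module F V] [Fintype V]

/-- Four random vectors are dependent with probability at most `4 / q`. -/
lemma indep_prob (hV : 4 ≤ Module.finrank F V) :
    1 - 4 / (Fintype.card F : ℝ) ≤
      𝔼 t : (V × V) × V × V, ind (LinearIndependent F ![t.2.2, t.2.1, t.1.1, t.1.2]) := by
  have hq1 : (1 : ℝ) < Fintype.card F := by exact_mod_cast Fintype.one_lt_card
  have hq0 : (0 : ℝ) < Fintype.card F := by linarith
  have h1 := card_mul_E_ind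
    (fun t : (V × V) × V × V => LinearIndependent F ![t.2.2, t.2.1, t.1.1, t.1.2])
  rw [ncard_quadruples hV] at h1
  simp only [Fintype.card_prod, Module.card_eq_pow_finrank (K := F) (V := V)] at h1
  set m := Module.finrank F V
  set E := 𝔼 t : (V × V) × V × V, ind (LinearIndependent F ![t.2.2, t.2.1, t.1.1, t.1.2])
  push_cast at h1
  set q : ℝ := (Fintype.card F : ℝ) with hq
  have h2 : ∏ i : Fin 4, (q ^ m * (1 - 1 / q)) ≤
      ∏ i : Fin 4, ((Fintype.card F ^ m - Fintype.card F ^ i.val : ℕ) : ℝ) := by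
    refine Finset.prod_le_prod (fun i _ => ?_) fun i _ => ?_
    · have : 1 / q ≤ 1 := by rw [div_le_one hq0]; exact hq1.le
      exact mul_nonneg (by positivity) (by linarith)
    · have hi : i.val + 1 ≤ m := by have := i.2; omega
      rw [Nat.cast_sub (Nat.pow_le_pow_right Fintype.card_pos (by omega))]
      push_cast
      rw [← hq]
      have h3 : q ^ (i.val + 1) ≤ q ^ m := pow_le_pow_right₀ hq1.le hi
      have h4 : q ^ i.val ≤ q ^ m * (1 / q) := by
        rw [mul_one_div, le_div_iff₀ hq0, ← pow_succ]; exact h3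
      linarith
  have h5 : 1 - 4 / q ≤ (1 - 1 / q) ^ 4 := by
    have h := one_add_mul_le_pow (a := -(1 / q)) (by
      have : 1 / q ≤ 1 := by rw [div_le_one hq0]; exact hq1.le
      linarith) 4
    calc 1 - 4 / q = 1 + (4 : ℕ) * -(1 / q) := by push_cast; ring
      _ ≤ _ := h
      _ = _ := by ring
  rw [← h1, Finset.prod_const, Finset.card_univ, Fintype.card_fin, mul_pow] at h2
  have hQ : 0 < (q ^ m) ^ 4 := by positivity
  have h6 : (q ^ m) ^ 4 * (1 - 1 / q) ^ 4 ≤ (q ^ m) ^ 4 * E := by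
    refine h2.trans (le_of_eq ?_); ring
  exact h5.trans (le_of_mul_le_mul_left h6 hQ)

/-- Four independent directions at a point give two cubes meeting in a plane. -/
lemma planePair_of_indep {F : Type} [Field F] [Fintype F] {n : ℕ} {x u v w w' : Fin n → F}
    (h : LinearIndependent F ![w', w, u, v]) :
    PlanePair F n (Cb F x u v w) (Cb F x u v w') := by
  have h3 : LinearIndependent F ![w, u, v] := by
    have := h.comp ![1, 2, 3] (by decide)
    convert this using 1
    ext i j; fin_cases i <;> rfl
  have h3' : LinearIndependent F ![w', u, v] := by
    have := h.comp ![0, 2, 3] (by decide)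
    convert this using 1
    ext i j; fin_cases i <;> rfl
  rw [indep_three] at h3 h3'
  have hx : ∀ w, x ∈ Cb F x u v w := fun w => AffineSubspace.self_mem_mk' _ _
  refine ⟨⟨⟨x, hx w⟩, by rw [direction_Cb]; exact h3⟩, ⟨⟨x, hx w'⟩, by rw [direction_Cb]; exact h3'⟩,
    ⟨x, hx w, hx w'⟩, ?_⟩
  rw [AffineSubspace.direction_inf_of_mem (hx w) (hx w'), direction_Cb, direction_Cb]
  have hsum := Submodule.finrank_sup_add_finrank_inf_eq (Submodule.span F {u, v, w})
    (Submodule.span F {u, v, w'})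
  have hsup : Module.finrank F
      (Submodule.span F {u, v, w} ⊔ Submodule.span F {u, v, w'} : Submodule F (Fin n → F)) = 4 := by
    rw [← Submodule.span_union]
    have : ({u, v, w} ∪ {u, v, w'} : Set (Fin n → F)) = Set.range ![w', w, u, v] := by
      simp only [Matrix.range_cons, Matrix.range_empty, Set.union_empty]
      ext; simp; tauto
    rw [this, finrank_span_eq_card h, Fintype.card_fin]
  omega

end Final

/-! ### The test as a random choice of vectors -/

section Main
variable {F : Type} [Field F] [Fintype F] {n d : ℕ}

/-- The test expressed by a random point and four random directions: conditioned on spanning two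
cubes which meet in a plane, they give a uniformly random such pair. -/
lemma test_le (hn : 6 ≤ n) (T : AffineSubspace F (Fin n → F) → (Fin n → F) → F)
    (h0 : 0 < epsT F n T) :
    (1 - 4 / (Fintype.card F : ℝ)) * epsT F n T ≤
      𝔼 x, 𝔼 u, 𝔼 v, 𝔼 w, 𝔼 w', ind (PlanePair F n (Cb F x u v w) (Cb F x u v w') ∧
        Agrees F n T (Cb F x u v w) (Cb F x u v w')) := by
  have hfin : Finite (AffineSubspace F (Fin n → F)) :=
    Finite.of_injective _ (SetLike.coe_injective (A := AffineSubspace F (Fin n → F)))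
  have key := fun P => ncard_fibers (fun t : (Fin n → F) × ((Fin n → F) × (Fin n → F)) ×
      (Fin n → F) × (Fin n → F) => (Cb F t.1 t.2.1.1 t.2.1.2 t.2.2.1,
      Cb F t.1 t.2.1.1 t.2.1.2 t.2.2.2)) (fun b => PlanePair F n b.1 b.2) P _
    fun b hb => ncard_fiber_pair hb.1.2 hb.2.1.2 hb.2.2.1 hb.2.2.2
  have k1 := key fun b => Agrees F n T b.1 b.2
  have k2 := key fun _ => True
  simp only [and_true] at k2
  have c1 := card_mul_E_ind (fun t : (Fin n → F) × ((Fin n → F) × (Fin n → F)) ×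
      (Fin n → F) × (Fin n → F) => PlanePair F n (Cb F t.1 t.2.1.1 t.2.1.2 t.2.2.1)
        (Cb F t.1 t.2.1.1 t.2.1.2 t.2.2.2) ∧ Agrees F n T (Cb F t.1 t.2.1.1 t.2.1.2 t.2.2.1)
        (Cb F t.1 t.2.1.1 t.2.1.2 t.2.2.2))
  have c2 := card_mul_E_ind (fun t : (Fin n → F) × ((Fin n → F) × (Fin n → F)) ×
      (Fin n → F) × (Fin n → F) => PlanePair F n (Cb F t.1 t.2.1.1 t.2.1.2 t.2.2.1)
        (Cb F t.1 t.2.1.1 t.2.1.2 t.2.2.2))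
  rw [k1] at c1
  rw [k2] at c2
  rw [E_five (fun x u v w w' => ind (PlanePair F n (Cb F x u v w) (Cb F x u v w') ∧
        Agrees F n T (Cb F x u v w) (Cb F x u v w')))] at c1
  rw [E_five (fun x u v w w' => ind (PlanePair F n (Cb F x u v w) (Cb F x u v w')))] at c2
  have hlow : 1 - 4 / (Fintype.card F : ℝ) ≤
      𝔼 x, 𝔼 u, 𝔼 v, 𝔼 w, 𝔼 w', ind (PlanePair F n (Cb F x u v w) (Cb F x u v w')) := by
    refine (indep_prob (F := F) (V := Fin n → F) (by simp; omega)).trans ?_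
    rw [E_prod (fun (s t : (Fin n → F) × (Fin n → F)) =>
        ind (LinearIndependent F ![t.2, t.1, s.1, s.2])),
      E_prod (fun u v => 𝔼 t : (Fin n → F) × (Fin n → F),
        ind (LinearIndependent F ![t.2, t.1, u, v])),
      ← E_const (α := Fin n → F) (𝔼 u, 𝔼 v, 𝔼 t : (Fin n → F) × (Fin n → F),
        ind (LinearIndependent F ![t.2, t.1, u, v]))]
    refine E_mono fun x => E_mono fun u => E_mono fun v => ?_
    rw [E_prod (fun w w' => ind (LinearIndependent F ![w', w, u, v]))]
    exact E_mono fun w => E_mono fun w' => ind_mono planePair_of_indep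
  set E₁ := 𝔼 x, 𝔼 u, 𝔼 v, 𝔼 w, 𝔼 w', ind (PlanePair F n (Cb F x u v w) (Cb F x u v w') ∧
        Agrees F n T (Cb F x u v w) (Cb F x u v w'))
  set E₂ := 𝔼 x, 𝔼 u, 𝔼 v, 𝔼 w, 𝔼 w', ind (PlanePair F n (Cb F x u v w) (Cb F x u v w'))
  unfold epsT at h0 ⊢
  set A := ({p : AffineSubspace F (Fin n → F) × AffineSubspace F (Fin n → F) |
      PlanePair F n p.1 p.2 ∧ Agrees F n T p.1 p.2}).ncard
  set B := ({p : AffineSubspace F (Fin n → F) × AffineSubspace F (Fin n → F) |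
      PlanePair F n p.1 p.2}).ncard
  have hB : (0 : ℝ) < B := by
    rcases (Nat.cast_nonneg (α := ℝ) B).lt_or_eq with h | h
    · exact h
    · rw [← h, div_zero] at h0; exact absurd h0 (lt_irrefl 0)
  have hM : (0 : ℝ) < Fintype.card ((Fin n → F) × ((Fin n → F) × (Fin n → F)) ×
      (Fin n → F) × (Fin n → F)) := Nat.cast_pos.2 Fintype.card_pos
  set M : ℝ := (Fintype.card ((Fin n → F) × ((Fin n → F) × (Fin n → F)) ×
      (Fin n → F) × (Fin n → F)) : ℝ)
  have e : E₁ = E₂ * (A / B) := by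
    rw [mul_div_assoc', eq_div_iff hB.ne']
    refine mul_left_cancel₀ hM.ne' ?_
    push_cast at c1 c2
    rw [← mul_assoc, ← mul_assoc, c1, c2]; ring
  rw [e]
  exact mul_le_mul_of_nonneg_right hlow h0.le

/-- The number of cubes with a property is proportional to its mass. -/
lemma ncard_cubes (P : AffineSubspace F (Fin n → F) → Prop) :
    (Fintype.card ((Fin n → F) × (Fin n → F) × (Fin n → F) × (Fin n → F)) : ℝ) *
      𝔼 x, mass x (fun C => IsCube F n C ∧ P C) =
    ((Fintype.card F ^ 3 * ∏ i : Fin 3, (Fintype.card F ^ 3 - Fintype.card F ^ i.val) : ℕ) : ℝ) *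
      ({C | IsCube F n C ∧ P C}.ncard : ℝ) := by
  have hfin : Finite (AffineSubspace F (Fin n → F)) :=
    Finite.of_injective _ (SetLike.coe_injective (A := AffineSubspace F (Fin n → F)))
  have k := ncard_fibers (fun t : (Fin n → F) × (Fin n → F) × (Fin n → F) × (Fin n → F) =>
      Cb F t.1 t.2.1 t.2.2.1 t.2.2.2) (fun C => IsCube F n C) P _
    fun b hb => ncard_fiber_cube hb.1 hb.2
  have c := card_mul_E_ind (fun t : (Fin n → F) × (Fin n → F) × (Fin n → F) × (Fin n → F) =>
      IsCube F n (Cb F t.1 t.2.1 t.2.2.1 t.2.2.2) ∧ P (Cb F t.1 t.2.1 t.2.2.1 t.2.2.2))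
  rw [k, E_four (fun x u v w => ind (IsCube F n (Cb F x u v w) ∧ P (Cb F x u v w)))] at c
  rw [← Nat.cast_mul, ← c]
  rfl

end Main

/-- If a degree-`d` cubes table on `F_q^n` (`n ≥ 6`, `d ≥ 1`, `11d < q^{1/9}`)
passes the cube versus cube test with probability `ε = ε(T) ≥ 10⁷d⁶/q`, then some polynomial
`g` of total degree at most `d` satisfies `g|_C = T(C)` for at least an `ε/30` fraction of all
cubes. -/
theorem cube_vs_cube_soundness {F : Type} [Field F] [Fintype F] {n d : ℕ}
    (hn : 6 ≤ n) (hd : 1 ≤ d)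
    (hq : (11 * d : ℝ) < (Fintype.card F : ℝ) ^ ((1 : ℝ) / 9))
    (T : AffineSubspace F (Fin n → F) → (Fin n → F) → F)
    (hT : DegTable F n d T)
    (hε : 10 ^ 7 * (d : ℝ) ^ 6 / (Fintype.card F : ℝ) ≤ epsT F n T) :
    ∃ g : MvPolynomial (Fin n) F, g.totalDegree ≤ d ∧
      (epsT F n T / 30) * (({C : AffineSubspace F (Fin n → F) | IsCube F n C}).ncard : ℝ) ≤
        (({C : AffineSubspace F (Fin n → F) | IsCube F n C ∧
            ∀ z ∈ C, T C z = eval z g}).ncard : ℝ) := by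
  classical
  have hq0 : (0 : ℝ) < Fintype.card F := card_pos'
  have hd1 : (1 : ℝ) ≤ d := by exact_mod_cast hd
  have hd6 : (d : ℝ) ≤ (d : ℝ) ^ 6 := le_self_pow₀ hd1 (by norm_num)
  have h0 : 0 < epsT F n T := lt_of_lt_of_le (by positivity) hε
  have h1 : epsT F n T ≤ 1 := by
    refine div_le_one_of_le₀ ?_ (Nat.cast_nonneg _)
    have hfin : Finite (AffineSubspace F (Fin n → F)) :=
      Finite.of_injective _ (SetLike.coe_injective (A := AffineSubspace F (Fin n → F)))
    exact_mod_cast Set.ncard_le_ncard (s := {p : AffineSubspace F (Fin n → F) ×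
      AffineSubspace F (Fin n → F) | PlanePair F n p.1 p.2 ∧ Agrees F n T p.1 p.2})
      (t := {p | PlanePair F n p.1 p.2}) (fun p hp => hp.1) (Set.toFinite _)
  have htest := test_le hn T h0
  set ε := epsT F n T with hεdef
  rw [div_le_iff₀ hq0] at hε
  have hqd : 10 ^ 7 * (d : ℝ) ^ 6 ≤ Fintype.card F := hε.trans (by nlinarith)
  have h4q : 4 / (Fintype.card F : ℝ) ≤ 1 / 100 := by
    rw [div_le_iff₀ hq0]; linarith
  choose! p hpd hpT using hT
  set Q := IsCube F n with hQ
  set f : AffineSubspace F (Fin n → F) → (Fin n → F) → F := fun C z => eval z (p C) with hf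
  -- two cubes that agree on their common plane agree at its random point `x`
  have hlow : 99 / 100 * ε ≤ 𝔼 x, ∑ σ, 𝔼 u, 𝔼 v,
      (𝔼 w, ind (Q (Cb F x u v w) ∧ f (Cb F x u v w) x = σ)) ^ 2 := by
    have h2 : 99 / 100 * ε ≤ (1 - 4 / (Fintype.card F : ℝ)) * ε :=
      mul_le_mul_of_nonneg_right (by linarith) h0.le
    refine (h2.trans htest).trans (E_mono fun x => ?_)
    simp only [sq, ← E_mul_E, ← E_sum]
    refine E_mono fun u => E_mono fun v => E_mono fun w => E_mono fun w' => ?_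
    refine le_trans ?_ (Finset.single_le_sum (fun σ _ => mul_nonneg (ind_nonneg _) (ind_nonneg _))
      (Finset.mem_univ (f (Cb F x u v w) x)))
    rw [← ind_and]
    refine ind_mono ?_
    rintro ⟨⟨hC, hC', -⟩, hag⟩
    have hx : ∀ w, x ∈ Cb F x u v w := fun w => AffineSubspace.self_mem_mk' _ _
    refine ⟨⟨hC, rfl⟩, hC', ?_⟩
    change eval x (p _) = eval x (p _)
    rw [← hpT _ hC _ (hx w), ← hpT _ hC' _ (hx w')]
    exact (hag x (hx w) (hx w')).symm
  obtain ⟨g, hg, hgm⟩ := global_structure hd (fun C hC => lineDeg_eval _ (hpd C hC))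
    (by positivity) (by linarith) hlow
  have h2d : 2 * d < Fintype.card F := by
    have : (2 * d : ℝ) < Fintype.card F := by linarith
    exact_mod_cast this
  obtain ⟨P, hPd, hP⟩ := hg.exists_poly h2d
  refine ⟨P, hPd, ?_⟩
  have hcongr : ∀ C, (Q C ∧ ∀ z ∈ C, f C z = g z) ↔ (Q C ∧ ∀ z ∈ C, T C z = eval z P) :=
    fun C => and_congr_right fun hC => forall₂_congr fun z hz => by
      rw [hpT C hC z hz, ← hP z]
  replace hgm := hgm.trans (E_mono fun x => mass_mono fun C => (hcongr C).1)
  have n1 := ncard_cubes (F := F) (n := n) (fun C => ∀ z ∈ C, T C z = eval z P)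
  have n2 := ncard_cubes (F := F) (n := n) (fun _ => True)
  simp only [and_true] at n2
  have hN : (0 : ℝ) < Fintype.card ((Fin n → F) × (Fin n → F) × (Fin n → F) × (Fin n → F)) :=
    Nat.cast_pos.2 Fintype.card_pos
  have hK : (0 : ℝ) < ((Fintype.card F ^ 3 *
      ∏ i : Fin 3, (Fintype.card F ^ 3 - Fintype.card F ^ i.val) : ℕ) : ℝ) := by
    refine Nat.cast_pos.2 (Nat.mul_pos (pow_pos Fintype.card_pos _) (Finset.prod_pos fun i _ => ?_))
    exact Nat.sub_pos_of_lt (Nat.pow_lt_pow_right Fintype.one_lt_card i.2)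
  have hm1 : 𝔼 x, mass x (fun C => IsCube F n C) ≤ 1 := E_le fun x => mass_le_one x _
  refine le_of_mul_le_mul_left ?_ hK
  rw [mul_left_comm, ← n1, ← n2, mul_left_comm]
  refine mul_le_mul_of_nonneg_left ?_ hN.le
  have := mul_le_mul_of_nonneg_left hm1 (show 0 ≤ ε / 30 by positivity)
  refine le_trans ?_ hgm
  linarith
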